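/- Let P ∈ ℤ[x] be a nonzero polynomial with deg P ≤ d and L(P) ≤ L, where L ≥ 3. Then |P(log 2)| ≥ exp{ −2.6·10⁵ · d² · (log L + d log d) · (1 + log d)⁻¹ }. -/

import Mathlib

/-!
The proof is Gelfond's method with Feldman's polynomials, applied to `θ = log 2`.

*Reduction.* The logarithm of the Mahler measure and the degree are additive over factors, so it
suffices to bound `|P(θ)|` below for irreducible `P`, in terms of these two quantities. The Mahler
measure of `P` is at most its length, and the length is at most `2 ^ deg P` times the Mahler
measure. Since `d ≤ log L + d log d` for `L ≥ 3`, passing from one to the other costs a factor `2`.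

*Auxiliary function.* Let `P` be irreducible of degree `d`. By the pigeonhole principle there are
integers `a`, not all zero and not too large, such that the function
`g(z) = ∑ a_{t,k,j} θ^t φ_k(z) 2^{jz}`, with `t < d`, `k < K`, `j < J`,
has its first `N` Taylor coefficients at `0` very small. Here the `φ_k` are Feldman's polynomials
`binom(z, b)^q binom(z, r)`, whose `i`-th derivatives at integers become integers after
multiplication by `lcm(1, …, b)^i`. A Taylor estimate shows that all the `g^{(s)}(m)`, `m < M`,
`s < S`, are small too. Up to the factor `lcm(1, …, b)^s`, such a value is `Q(θ)` for an explicit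
`Q ∈ ℤ[X]`, because `2^{jm}` is an integer.

*Nonvanishing.* Let `β ≠ 0` be a complex root of `P`. Replacing `θ` by `β`, except in the values
`2^{jm}`, turns the numbers `g^{(s)}(m)` into values of iterates of the operators `p ↦ p' + jβp` on
polynomials. Comparing the degree of a Wronskian-type determinant with its order of vanishing at
the integers `m < M` shows that these cannot all vanish when `J K` is less than about `M (S - J)`.
So some `Q` has `Q(β) ≠ 0`, that is, `P ∤ Q`.

*Conclusion.* The resultant of `P` and `Q` is a nonzero integer, hence at least `1` in absolute
value, while it is small if `P(θ)` and `Q(θ)` both are. As `Q(θ)` is small by construction, `P(θ)`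
is not. The parameters are `J = 40 d`, `M = 70 d b`, `K = M y`, `S = J (y + 1)`, `N = J K`, where
`b` is about `log L(P) / (d (1 + log d))` and `y` about `20 d / (1 + log d)`.
-/

open Polynomial

/-- The length of an integer polynomial: the sum of the absolute values of its
coefficients. -/
noncomputable def polyLength (P : Polynomial ℤ) : ℝ :=
  ∑ i ∈ Finset.range (P.natDegree + 1), (|P.coeff i| : ℝ)

/-! ### Weighted lengths of polynomials -/

/-- The weighted length `∑ ‖a_i‖ ρ ^ i` of a polynomial `∑ a_i X ^ i`. It bounds the values of the
polynomial on the disc of radius `ρ`, and for `ρ = 1` it is the usual length. -/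
noncomputable def weightedLength {R : Type*} [SeminormedRing R] (ρ : ℝ) (p : R[X]) : ℝ :=
  p.sum fun i a => ‖a‖ * ρ ^ i

namespace weightedLength

variable {R : Type*} [SeminormedRing R] {ρ : ℝ}

lemma eq_sum_range (ρ : ℝ) (p : R[X]) {n : ℕ} (hn : p.natDegree < n) :
    weightedLength ρ p = ∑ i ∈ Finset.range n, ‖p.coeff i‖ * ρ ^ i :=
  Polynomial.sum_over_range' p (by simp) n hn

lemma nonneg (hρ : 0 ≤ ρ) (p : R[X]) : 0 ≤ weightedLength ρ p :=
  Finset.sum_nonneg fun i _ => by positivity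

lemma monomial_eq (ρ : ℝ) (n : ℕ) (a : R) :
    weightedLength ρ (monomial n a) = ‖a‖ * ρ ^ n :=
  sum_monomial_index a _ (by simp)

lemma zero_eq (ρ : ℝ) : weightedLength ρ (0 : R[X]) = 0 := sum_zero_index _

lemma C_eq (ρ : ℝ) (a : R) : weightedLength ρ (C a) = ‖a‖ := by
  rw [← monomial_zero_left, monomial_eq, pow_zero, mul_one]

lemma X_pow_eq [NormOneClass R] (ρ : ℝ) (n : ℕ) : weightedLength ρ (X ^ n : R[X]) = ρ ^ n := by
  rw [← monomial_one_right_eq_X_pow, monomial_eq, norm_one, one_mul]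

lemma map_eq {S : Type*} [SeminormedRing S] (f : R →+* S) (hf : ∀ a, ‖f a‖ = ‖a‖) (p : R[X]) :
    weightedLength ρ (p.map f) = weightedLength ρ p := by
  rw [eq_sum_range ρ _ (Nat.lt_succ_of_le natDegree_map_le),
    eq_sum_range ρ p (Nat.lt_succ_self _)]
  simp only [coeff_map, hf]

lemma sum_norm_coeff_le (hρ : 0 ≤ ρ) (p : R[X]) (s : Finset ℕ) :
    ∑ i ∈ s, ‖p.coeff i‖ * ρ ^ i ≤ weightedLength ρ p := by
  calc ∑ i ∈ s, ‖p.coeff i‖ * ρ ^ i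
      ≤ ∑ i ∈ s ∪ p.support, ‖p.coeff i‖ * ρ ^ i :=
        Finset.sum_le_sum_of_subset_of_nonneg Finset.subset_union_left
          fun i _ _ => by positivity
    _ = weightedLength ρ p :=
        (Finset.sum_subset Finset.subset_union_right fun i _ hi => by
          rw [notMem_support_iff.1 hi, norm_zero, zero_mul]).symm

lemma add_le (hρ : 0 ≤ ρ) (p q : R[X]) :
    weightedLength ρ (p + q) ≤ weightedLength ρ p + weightedLength ρ q := by
  calc weightedLength ρ (p + q)
      ≤ ∑ i ∈ (p + q).support, (‖p.coeff i‖ * ρ ^ i + ‖q.coeff i‖ * ρ ^ i) := by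
        refine Finset.sum_le_sum fun i _ => ?_
        rw [coeff_add, ← add_mul]
        exact mul_le_mul_of_nonneg_right (norm_add_le _ _) (pow_nonneg hρ i)
    _ ≤ weightedLength ρ p + weightedLength ρ q := by
        rw [Finset.sum_add_distrib]
        exact add_le_add (sum_norm_coeff_le hρ p _) (sum_norm_coeff_le hρ q _)

lemma sum_le (hρ : 0 ≤ ρ) {ι : Type*} (s : Finset ι) (f : ι → R[X]) :
    weightedLength ρ (∑ i ∈ s, f i) ≤ ∑ i ∈ s, weightedLength ρ (f i) :=
  Finset.le_sum_of_subadditive _ (zero_eq ρ).le (add_le hρ) s f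

lemma mul_le (hρ : 0 ≤ ρ) (p q : R[X]) :
    weightedLength ρ (p * q) ≤ weightedLength ρ p * weightedLength ρ q := by
  calc weightedLength ρ (p * q)
      ≤ ∑ i ∈ p.support, ∑ j ∈ q.support, ‖p.coeff i * q.coeff j‖ * ρ ^ (i + j) := by
        rw [mul_eq_sum_sum]
        refine (sum_le hρ _ _).trans (Finset.sum_le_sum fun i _ => ?_)
        refine (sum_le hρ _ _).trans_eq (Finset.sum_congr rfl fun j _ => ?_)
        exact monomial_eq ρ _ _
    _ ≤ ∑ i ∈ p.support, ∑ j ∈ q.support,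
          (‖p.coeff i‖ * ρ ^ i) * (‖q.coeff j‖ * ρ ^ j) := by
        refine Finset.sum_le_sum fun i _ => Finset.sum_le_sum fun j _ => ?_
        rw [mul_mul_mul_comm, ← pow_add]
        gcongr
        exact norm_mul_le _ _
    _ = weightedLength ρ p * weightedLength ρ q := (Finset.sum_mul_sum _ _ _ _).symm

lemma pow_le [NormOneClass R] (hρ : 0 ≤ ρ) (p : R[X]) (n : ℕ) :
    weightedLength ρ (p ^ n) ≤ weightedLength ρ p ^ n := by
  induction n with
  | zero => rw [pow_zero, pow_zero, ← C_1, C_eq, norm_one]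
  | succ n ih =>
    rw [pow_succ, pow_succ]
    exact (mul_le hρ _ _).trans (mul_le_mul_of_nonneg_right ih (nonneg hρ _))

end weightedLength

/-! ### The resultant of two polynomials that are small at the same point -/

lemma norm_det_le_prod_mul_prod_sum {n R : Type*} [Fintype n] [DecidableEq n]
    [NormedCommRing R] [NormOneClass R] {A : Matrix n n R} {r : n → ℝ} {B : Matrix n n ℝ}
    (hr : ∀ i, 0 ≤ r i) (hB : ∀ i j, 0 ≤ B i j) (hA : ∀ i j, ‖A i j‖ ≤ r i * B i j) :
    ‖A.det‖ ≤ (∏ i, r i) * ∏ j, ∑ i, B i j := by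
  have term_le : ∀ σ : Equiv.Perm n,
      ‖Equiv.Perm.sign σ • ∏ j, A (σ j) j‖ ≤ (∏ i, r i) * ∏ j, B (σ j) j := fun σ =>
    calc ‖Equiv.Perm.sign σ • ∏ j, A (σ j) j‖ = ‖∏ j, A (σ j) j‖ := by
          rcases Int.units_eq_one_or (Equiv.Perm.sign σ) with h | h <;>
            simp only [h, one_smul, norm_neg, Units.neg_smul]
      _ ≤ ∏ j, ‖A (σ j) j‖ := Finset.norm_prod_le Finset.univ _
      _ ≤ ∏ j, r (σ j) * B (σ j) j :=
          Finset.prod_le_prod (fun _ _ => norm_nonneg _) fun j _ => hA _ _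
      _ = (∏ i, r i) * ∏ j, B (σ j) j := by
          rw [Finset.prod_mul_distrib, Equiv.prod_comp σ r]
  calc ‖A.det‖ ≤ ∑ σ : Equiv.Perm n, (∏ i, r i) * ∏ j, B (σ j) j := by
        rw [Matrix.det_apply]
        exact norm_sum_le_of_le _ fun σ _ => term_le σ
    _ ≤ (∏ i, r i) * ∏ j, ∑ i, B i j := by
        rw [← Finset.mul_sum, Finset.prod_univ_sum, Fintype.piFinset_univ]
        refine mul_le_mul_of_nonneg_left ?_ (Finset.prod_nonneg fun i _ => hr i)
        rw [← Finset.sum_image (g := fun σ : Equiv.Perm n => (σ : n → n))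
          (f := fun f : n → n => ∏ j, B (f j) j) fun _ _ _ _ h => Equiv.coe_fn_injective h]
        exact Finset.sum_le_univ_sum_of_nonneg fun f => Finset.prod_nonneg fun _ _ => hB _ _

lemma norm_det_le_of_norm_sum_smul_le {n R : Type*} [Fintype n] [DecidableEq n]
    [NormedCommRing R] [NormOneClass R] {A : Matrix n n R} {u : n → R} {i₀ : n} (hu : u i₀ = 1)
    {c : n → ℝ} {δ : ℝ} (hδ : 0 ≤ δ) (hA : ∀ j, ∑ i, ‖A i j‖ ≤ c j)
    (hrow : ∀ j, ‖(∑ i, u i • A i) j‖ ≤ δ * c j) : ‖A.det‖ ≤ δ * ∏ j, 2 * c j := by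
  let B : Matrix n n ℝ := (Matrix.of fun i j => ‖A i j‖).updateRow i₀ c
  have B_nonneg (i j) : 0 ≤ B i j := by
    have hc : 0 ≤ c j := (Finset.sum_nonneg fun i _ => norm_nonneg _).trans (hA j)
    by_cases hi : i = i₀ <;> simp [B, Matrix.updateRow_apply, hi, hc]
  have B_column_le (j) : ∑ i, B i j ≤ 2 * c j := by
    calc ∑ i, B i j ≤ ∑ i, ((if i = i₀ then c j else 0) + ‖A i j‖) := by
          refine Finset.sum_le_sum fun i _ => ?_
          by_cases hi : i = i₀ <;> simp [B, Matrix.updateRow_apply, hi]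
      _ ≤ 2 * c j := by
          rw [Finset.sum_add_distrib, Finset.sum_ite_eq' _ i₀, if_pos (Finset.mem_univ _), two_mul]
          exact add_le_add_right (hA j) _
  calc ‖A.det‖ = ‖(A.updateRow i₀ (∑ i, u i • A i)).det‖ := by
        rw [Matrix.det_updateRow_sum A i₀ u, hu, one_smul]
    _ ≤ (∏ i, if i = i₀ then δ else 1) * ∏ j, ∑ i, B i j :=
        norm_det_le_prod_mul_prod_sum (fun i => by positivity) B_nonneg fun i j => by
          by_cases hi : i = i₀
          · simpa [B, Matrix.updateRow_apply, hi] using hrow j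
          · simp [B, Matrix.updateRow_apply, hi]
    _ ≤ δ * ∏ j, 2 * c j := by
        rw [Finset.prod_ite_eq' Finset.univ i₀, if_pos (Finset.mem_univ _)]
        exact mul_le_mul_of_nonneg_left (Finset.prod_le_prod
          (fun j _ => Finset.sum_nonneg fun i _ => B_nonneg i j) fun j _ => B_column_le j) hδ

section Sylvester

variable {R : Type*} [CommRing R] {f g : R[X]} {m n : ℕ}

lemma sylvester_castAdd (hg : g.natDegree ≤ n) (i : Fin (m + n)) (j : Fin m) :
    sylvester f g m n i (Fin.castAdd n j) = (g * X ^ (j : ℕ)).coeff i := by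
  simp only [sylvester, Matrix.of_apply, Fin.addCases_left, coeff_mul_X_pow', Set.mem_Icc, ite_and]
  split_ifs <;> first | rfl | exact (coeff_eq_zero_of_natDegree_lt (by lia)).symm

lemma sylvester_natAdd (hf : f.natDegree ≤ m) (i : Fin (m + n)) (j : Fin n) :
    sylvester f g m n i (Fin.natAdd m j) = (f * X ^ (j : ℕ)).coeff i := by
  simp only [sylvester, Matrix.of_apply, Fin.addCases_right, coeff_mul_X_pow', Set.mem_Icc, ite_and]
  split_ifs <;> first | rfl | exact (coeff_eq_zero_of_natDegree_lt (by lia)).symm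

lemma sum_pow_mul_coeff_mul_X_pow {N j : ℕ} {p : R[X]} (hN : p.natDegree + j < N) (x : R) :
    ∑ i : Fin N, x ^ (i : ℕ) * (p * X ^ j).coeff i = x ^ j * p.eval x := by
  have hdeg : (p * X ^ j).natDegree < N :=
    (natDegree_mul_le_of_le le_rfl (natDegree_X_pow_le j)).trans_lt hN
  calc ∑ i : Fin N, x ^ (i : ℕ) * (p * X ^ j).coeff i
      = ∑ i ∈ Finset.range N, x ^ i * (p * X ^ j).coeff i :=
        Fin.sum_univ_eq_sum_range (fun i => x ^ i * (p * X ^ j).coeff i) N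
    _ = (p * X ^ j).eval x := by
        rw [eval_eq_sum_range' hdeg]
        exact Finset.sum_congr rfl fun i _ => mul_comm _ _
    _ = x ^ j * p.eval x := by rw [eval_mul, eval_pow, eval_X, mul_comm]

end Sylvester

section NormResultant

variable {K : Type*} [NormedField K] {f g : K[X]} {m n : ℕ}

lemma sum_norm_coeff_mul_X_pow_le (p : K[X]) (j N : ℕ) :
    ∑ i : Fin N, ‖(p * X ^ j).coeff i‖ ≤ weightedLength 1 p := by
  calc ∑ i : Fin N, ‖(p * X ^ j).coeff i‖ = ∑ i ∈ Finset.range N, ‖(p * X ^ j).coeff i‖ :=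
        Fin.sum_univ_eq_sum_range (fun i => ‖(p * X ^ j).coeff i‖) N
    _ ≤ weightedLength 1 (p * X ^ j) := by
        simpa using weightedLength.sum_norm_coeff_le zero_le_one (p * X ^ j) (Finset.range N)
    _ ≤ weightedLength 1 p := by
        simpa [weightedLength.X_pow_eq] using weightedLength.mul_le zero_le_one p (X ^ j)

lemma norm_pow_mul_eval_le {x : K} (hx : ‖x‖ ≤ 1) (j : ℕ) {p : K[X]} {B : ℝ}
    (h : ‖p.eval x‖ ≤ B) : ‖x ^ j * p.eval x‖ ≤ B := by
  rw [norm_mul, norm_pow]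
  exact (mul_le_of_le_one_left (norm_nonneg _) (pow_le_one₀ (norm_nonneg _) hx)).trans h

lemma sum_pow_smul_sylvester (hf : f.natDegree ≤ m) (hg : g.natDegree ≤ n) (x : K) :
    ∑ i : Fin (m + n), x ^ (i : ℕ) • sylvester f g m n i =
      Fin.addCases (fun j : Fin m => x ^ (j : ℕ) * g.eval x)
        fun j : Fin n => x ^ (j : ℕ) * f.eval x := by
  funext j
  simp only [Finset.sum_apply, Pi.smul_apply, smul_eq_mul]
  induction j using Fin.addCases with
  | left j =>
    simp only [sylvester_castAdd hg, Fin.addCases_left]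
    exact sum_pow_mul_coeff_mul_X_pow (by omega) x
  | right j =>
    simp only [sylvester_natAdd hf, Fin.addCases_right]
    exact sum_pow_mul_coeff_mul_X_pow (by omega) x

lemma sum_norm_sylvester_le (hf : f.natDegree ≤ m) (hg : g.natDegree ≤ n) (j : Fin (m + n)) :
    ∑ i, ‖sylvester f g m n i j‖ ≤
      Fin.addCases (fun _ => weightedLength 1 g) (fun _ => weightedLength 1 f) j := by
  induction j using Fin.addCases with
  | left j =>
    simp only [sylvester_castAdd hg, Fin.addCases_left]
    exact sum_norm_coeff_mul_X_pow_le g j _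
  | right j =>
    simp only [sylvester_natAdd hf, Fin.addCases_right]
    exact sum_norm_coeff_mul_X_pow_le f j _

lemma norm_resultant_le (hf : f.natDegree ≤ m) (hg : g.natDegree ≤ n) (hm : 0 < m) {x : K}
    (hx : ‖x‖ ≤ 1) {Lf Lg δ : ℝ} (hLf : weightedLength 1 f ≤ Lf) (hLg : weightedLength 1 g ≤ Lg)
    (hδ : 0 ≤ δ) (hfx : ‖f.eval x‖ ≤ δ * Lf) (hgx : ‖g.eval x‖ ≤ δ * Lg) :
    ‖resultant f g m n‖ ≤ δ * ((2 * Lf) ^ n * (2 * Lg) ^ m) := by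
  let c : Fin (m + n) → ℝ := Fin.addCases (fun _ => Lg) fun _ => Lf
  have column_le (j) : ∑ i, ‖sylvester f g m n i j‖ ≤ c j := by
    refine (sum_norm_sylvester_le hf hg j).trans ?_
    induction j using Fin.addCases with
    | left j => simpa only [c, Fin.addCases_left] using hLg
    | right j => simpa only [c, Fin.addCases_right] using hLf
  have row_le (j) :
      ‖(∑ i : Fin (m + n), x ^ (i : ℕ) • sylvester f g m n i) j‖ ≤ δ * c j := by
    rw [sum_pow_smul_sylvester hf hg]
    induction j using Fin.addCases with
    | left j => simpa only [c, Fin.addCases_left] using norm_pow_mul_eval_le hx j hgx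
    | right j => simpa only [c, Fin.addCases_right] using norm_pow_mul_eval_le hx j hfx
  calc ‖resultant f g m n‖ ≤ δ * ∏ j, 2 * c j :=
        norm_det_le_of_norm_sum_smul_le (i₀ := ⟨0, by omega⟩) (pow_zero x) hδ column_le row_le
    _ = δ * ((2 * Lf) ^ n * (2 * Lg) ^ m) := by
        simp [c, Fin.prod_univ_add, mul_comm]

end NormResultant

lemma resultant_ne_zero_of_aeval_ne_zero {E : Type*} [Field E] [CharZero E] {P Q : ℤ[X]}
    (hP : Irreducible P) (hd : P.natDegree ≠ 0) {β : E} (hβ : aeval β P = 0)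
    (hQ : aeval β Q ≠ 0) : resultant P Q ≠ 0 := by
  have hinj : Function.Injective (Int.castRingHom ℚ) := Int.cast_injective
  have hirr : Irreducible (P.map (Int.castRingHom ℚ)) :=
    (IsPrimitive.Int.irreducible_iff_irreducible_map_cast (hP.isPrimitive hd)).1 hP
  have aeval_map : ∀ F : ℤ[X], aeval β (F.map (Int.castRingHom ℚ)) = aeval β F :=
    aeval_map_algebraMap ℚ β
  have hcop : IsCoprime (P.map (Int.castRingHom ℚ)) (Q.map (Int.castRingHom ℚ)) := by
    rw [hirr.coprime_iff_not_dvd]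
    intro hdvd
    have := aeval_eq_zero_of_dvd_aeval_eq_zero hdvd ((aeval_map P).trans hβ)
    exact hQ ((aeval_map Q).symm.trans this)
  intro h
  refine (resultant_eq_zero_iff.1 ?_).2 hcop
  rw [natDegree_map_eq_of_injective hinj, natDegree_map_eq_of_injective hinj,
    resultant_map_map, h, map_zero]

lemma one_le_weightedLength_one {P : ℤ[X]} (hP : P ≠ 0) : 1 ≤ weightedLength 1 P :=
  calc (1 : ℝ) ≤ ‖P.leadingCoeff‖ := by
        rw [Int.norm_eq_abs]
        exact_mod_cast Int.one_le_abs (leadingCoeff_ne_zero.2 hP)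
    _ ≤ weightedLength 1 P := by
        simpa using weightedLength.sum_norm_coeff_le zero_le_one P {P.natDegree}

/-- Otherwise the resultant of `P` and `Q`, a nonzero integer, would be less than `1`. -/
lemma le_abs_aeval_or_le_abs_aeval {P Q : ℤ[X]} (hPQ : resultant P Q ≠ 0) (hd : 0 < P.natDegree)
    {x : ℝ} (hx : |x| ≤ 1) {LP LQ : ℝ} (hLP : weightedLength 1 P ≤ LP)
    (hLQ : weightedLength 1 Q ≤ LQ) {q : ℕ} (hq : Q.natDegree ≤ q) :
    LP ≤ |aeval x P| * ((2 * LP) ^ q * (2 * LQ) ^ P.natDegree) ∨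
      LQ ≤ |aeval x Q| * ((2 * LP) ^ q * (2 * LQ) ^ P.natDegree) := by
  have hLP₁ : 1 ≤ LP := (one_le_weightedLength_one (ne_zero_of_natDegree_gt hd)).trans hLP
  have hLQ₀ : 0 ≤ LQ := (weightedLength.nonneg zero_le_one Q).trans hLQ
  set T := (2 * LP) ^ q * (2 * LQ) ^ P.natDegree
  by_contra! ⟨hPx, hQx⟩
  have hLQpos : 0 < LQ := lt_of_le_of_lt (by positivity) hQx
  let φ := Int.castRingHom ℝ
  have length_map : ∀ F : ℤ[X], weightedLength 1 (F.map φ) = weightedLength 1 F :=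
    weightedLength.map_eq φ fun a => Int.norm_cast_real a
  have eval_map : ∀ F : ℤ[X], ‖(F.map φ).eval x‖ = |aeval x F| := fun F =>
    congrArg _ (eval_map_algebraMap F x)
  let δ := max (|aeval x P| / LP) (|aeval x Q| / LQ)
  have hδ : 0 ≤ δ := le_max_of_le_left (by positivity)
  have res_le := norm_resultant_le (f := P.map φ) (g := Q.map φ) natDegree_map_le natDegree_map_le
    hd hx ((length_map P).trans_le hLP) ((length_map Q).trans_le hLQ) hδ
    ((eval_map P).trans_le ((div_le_iff₀ (by positivity)).1 (le_max_left _ _)))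
    ((eval_map Q).trans_le ((div_le_iff₀ hLQpos).1 (le_max_right _ _)))
  have one_le_res : 1 ≤ ‖resultant (P.map φ) (Q.map φ) P.natDegree Q.natDegree‖ := by
    rw [resultant_map_map, eq_intCast, Int.norm_cast_real, Int.norm_eq_abs]
    exact_mod_cast Int.one_le_abs hPQ
  have δT_lt_one : δ * T < 1 := by
    rw [max_mul_of_nonneg _ _ (by positivity), max_lt_iff, div_mul_eq_mul_div, div_mul_eq_mul_div,
      div_lt_one (by positivity), div_lt_one hLQpos]
    exact ⟨hPx, hQx⟩
  refine absurd ((one_le_res.trans res_le).trans ?_) δT_lt_one.not_ge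
  have : 1 ≤ 2 * LP := by linarith
  exact mul_le_mul_of_nonneg_left
    (mul_le_mul_of_nonneg_right (pow_le_pow_right₀ this hq) (by positivity)) hδ

/-! ### The zero estimate -/

section TwistedDerivative

variable {R : Type*} [CommRing R]

/-- The operator `p ↦ p' + a p`, which describes the derivative of `p(z) exp(a z)`: its `s`-th power
sends `p` to `q` with `(p(z) exp(a z))⁽ˢ⁾ = q(z) exp(a z)`. -/
noncomputable def twistedDerivative (a : R) : Module.End R R[X] := derivative + a • 1

lemma twistedDerivative_apply (a : R) (p : R[X]) :
    twistedDerivative a p = derivative p + C a * p := by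
  rw [twistedDerivative, LinearMap.add_apply, LinearMap.smul_apply, Module.End.one_apply,
    smul_eq_C_mul]

lemma twistedDerivative_pow_succ_apply (a : R) (s : ℕ) (p : R[X]) :
    (twistedDerivative a ^ (s + 1)) p =
      derivative ((twistedDerivative a ^ s) p) + C a * (twistedDerivative a ^ s) p := by
  rw [pow_succ', Module.End.mul_apply, twistedDerivative_apply]

lemma twistedDerivative_pow_apply (a : R) (s : ℕ) (p : R[X]) :
    (twistedDerivative a ^ s) p =
      ∑ i ∈ Finset.range (s + 1), C ((s.choose i : R) * a ^ (s - i)) * derivative^[i] p := by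
  have hcomm : Commute (derivative : Module.End R R[X]) (a • 1) :=
    (Commute.one_right _).smul_right a
  rw [twistedDerivative, hcomm.add_pow, LinearMap.sum_apply]
  refine Finset.sum_congr rfl fun i _ => ?_
  rw [_root_.smul_pow, one_pow, ← nsmul_eq_mul', LinearMap.smul_apply, mul_smul_comm, mul_one,
    LinearMap.smul_apply, Module.End.pow_apply, smul_eq_C_mul, nsmul_eq_mul, C_mul, mul_assoc,
    C_eq_natCast]

lemma natDegree_twistedDerivative_pow_le (a : R) (s : ℕ) (p : R[X]) :
    ((twistedDerivative a ^ s) p).natDegree ≤ p.natDegree := by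
  induction s with
  | zero => exact le_rfl
  | succ s ih =>
    rw [twistedDerivative_pow_succ_apply]
    exact (natDegree_add_le _ _).trans (max_le
      ((natDegree_derivative_le _).trans ((Nat.sub_le _ _).trans ih))
      ((natDegree_C_mul_le _ _).trans ih))

lemma coeff_natDegree_twistedDerivative_pow (a : R) (s : ℕ) (p : R[X]) :
    ((twistedDerivative a ^ s) p).coeff p.natDegree = a ^ s * p.leadingCoeff := by
  induction s with
  | zero => rw [pow_zero, pow_zero, one_mul, Module.End.one_apply, coeff_natDegree]
  | succ s ih =>
    rw [twistedDerivative_pow_succ_apply, coeff_add, coeff_C_mul, ih, coeff_derivative,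
      coeff_eq_zero_of_natDegree_lt
        (Nat.lt_succ_of_le (natDegree_twistedDerivative_pow_le a s p)), pow_succ']
    ring

/-- The `s`-th derivative at `x` of the exponential polynomial `∑ i, p i (z) exp(α i z)`, with `w i`
in place of `exp(α i x)`. In this form it makes sense over every commutative ring. -/
noncomputable def expPolyDeriv {ι : Type*} [Fintype ι] (α : ι → R) (p : ι → R[X]) (w : ι → R)
    (s : ℕ) (x : R) : R :=
  ∑ i, ((twistedDerivative (α i) ^ s) (p i)).eval x * w i

/-- The Wronskian determinant of the functions `p i (z) exp(α i z)`, divided by the product of the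
exponentials. -/
noncomputable def expWronskian {t : ℕ} (α : Fin t → R) (p : Fin t → R[X]) : R[X] :=
  (Matrix.of fun s i : Fin t => (twistedDerivative (α i) ^ (s : ℕ)) (p i)).det

lemma coeff_prod_sum_of_natDegree_le {ι : Type*} (s : Finset ι) (f : ι → R[X]) (e : ι → ℕ)
    (h : ∀ i ∈ s, (f i).natDegree ≤ e i) :
    (∏ i ∈ s, f i).coeff (∑ i ∈ s, e i) = ∏ i ∈ s, (f i).coeff (e i) := by
  classical
  induction s using Finset.induction_on with
  | empty => rw [Finset.prod_empty, Finset.prod_empty, Finset.sum_empty, coeff_one_zero]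
  | insert a s ha ih =>
    have hs : ∀ i ∈ s, (f i).natDegree ≤ e i := fun i hi => h i (Finset.mem_insert_of_mem hi)
    rw [Finset.prod_insert ha, Finset.sum_insert ha, Finset.prod_insert ha,
      coeff_mul_add_eq_of_natDegree_le (h a (Finset.mem_insert_self _ _))
        ((natDegree_prod_le _ _).trans (Finset.sum_le_sum hs)), ih hs]

lemma natDegree_expWronskian_le {t : ℕ} (α : Fin t → R) (p : Fin t → R[X]) :
    (expWronskian α p).natDegree ≤ ∑ i, (p i).natDegree := by
  rw [expWronskian, Matrix.det_apply]
  refine natDegree_sum_le_of_forall_le _ _ fun σ _ => ?_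
  exact (natDegree_smul_le _ _).trans ((natDegree_prod_le _ _).trans
    (Finset.sum_le_sum fun i _ => natDegree_twistedDerivative_pow_le _ _ _))

lemma coeff_expWronskian {t : ℕ} (α : Fin t → R) (p : Fin t → R[X]) :
    (expWronskian α p).coeff (∑ i, (p i).natDegree) =
      (Matrix.vandermonde α).det * ∏ i, (p i).leadingCoeff := by
  have hfactor : (Matrix.of fun s i : Fin t => α i ^ (s : ℕ) * (p i).leadingCoeff) =
      (Matrix.vandermonde α).transpose * Matrix.diagonal fun i => (p i).leadingCoeff := by
    ext s i
    rw [Matrix.mul_diagonal, Matrix.transpose_apply, Matrix.vandermonde_apply, Matrix.of_apply]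
  rw [← Matrix.det_transpose (Matrix.vandermonde α), ← Matrix.det_diagonal, ← Matrix.det_mul,
    ← hfactor, expWronskian, Matrix.det_apply, Matrix.det_apply, finsetSum_coeff]
  refine Finset.sum_congr rfl fun σ _ => ?_
  rw [coeff_smul, coeff_prod_sum_of_natDegree_le]
  · simp only [Matrix.of_apply, coeff_natDegree_twistedDerivative_pow]
  · exact fun i _ => natDegree_twistedDerivative_pow_le _ _ _

lemma expWronskian_ne_zero [IsDomain R] {t : ℕ} {α : Fin t → R} (hα : Function.Injective α)
    {p : Fin t → R[X]} (hp : ∀ i, p i ≠ 0) : expWronskian α p ≠ 0 := fun h0 => by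
  have hcoeff := coeff_expWronskian α p
  rw [h0, coeff_zero] at hcoeff
  exact mul_ne_zero (Matrix.det_vandermonde_ne_zero_iff.2 hα)
    (Finset.prod_ne_zero_iff.2 fun i _ => leadingCoeff_ne_zero.2 (hp i)) hcoeff.symm

end TwistedDerivative

lemma dvd_det_mul_of_dvd_mulVec {n R : Type*} [Fintype n] [DecidableEq n] [CommRing R]
    {A : Matrix n n R} {v : n → R} {q : R} (h : ∀ s, q ∣ A.mulVec v s) (i : n) :
    q ∣ A.det * v i := by
  have hcramer : A.det * v i = ∑ s, A.adjugate i s * A.mulVec v s := by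
    calc A.det * v i = (A.adjugate * A).mulVec v i := by
          rw [Matrix.adjugate_mul, Matrix.smul_mulVec, Matrix.one_mulVec, Pi.smul_apply,
            smul_eq_mul]
      _ = ∑ s, A.adjugate i s * A.mulVec v s := by rw [← Matrix.mulVec_mulVec]; rfl
  rw [hcramer]
  exact Finset.dvd_sum fun s _ => (h s).mul_left _

section ZeroEstimate

variable {F : Type*} [Field F]

/-- The Taylor expansion of a polynomial at `x`, as a formal power series. -/
noncomputable def taylorSeries (x : F) : F[X] →+* PowerSeries F :=
  coeToPowerSeries.ringHom.comp (compRingHom (X + C x))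

lemma taylorSeries_apply (x : F) (p : F[X]) :
    taylorSeries x p = (p.comp (X + C x) : F[X]) := rfl

lemma constantCoeff_taylorSeries (x : F) (p : F[X]) :
    PowerSeries.constantCoeff (taylorSeries x p) = p.eval x := by
  rw [taylorSeries_apply, constantCoeff_coe, coeff_zero_eq_eval_zero, eval_comp]
  simp only [eval_add, eval_X, eval_C, zero_add]

lemma derivative_taylorSeries (x : F) (p : F[X]) :
    PowerSeries.derivative F (taylorSeries x p) = taylorSeries x (derivative p) := by
  simp only [taylorSeries_apply, PowerSeries.derivative_coe, derivative_comp, derivative_add,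
    derivative_X, derivative_C, add_zero, one_mul]

lemma taylorSeries_C (x a : F) : taylorSeries x (C a) = PowerSeries.C a := by
  rw [taylorSeries_apply, C_comp, coe_C]

lemma X_pow_dvd_taylorSeries_iff {x : F} {k : ℕ} {p : F[X]} :
    PowerSeries.X ^ k ∣ taylorSeries x p ↔ (X - C x) ^ k ∣ p := by
  rw [X_sub_C_pow_dvd_iff, X_pow_dvd_iff, PowerSeries.X_pow_dvd_iff]
  simp only [taylorSeries_apply, coeff_coe]

/-- The formal power series of `w exp(a z)`. -/
noncomputable def expSeries (a w : F) : PowerSeries F :=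
  PowerSeries.mk fun n => w * a ^ n / (n.factorial : F)

lemma constantCoeff_expSeries (a w : F) : PowerSeries.constantCoeff (expSeries a w) = w := by
  rw [← PowerSeries.coeff_zero_eq_constantCoeff_apply, expSeries, PowerSeries.coeff_mk]
  simp

variable [CharZero F]

lemma derivative_expSeries (a w : F) :
    PowerSeries.derivative F (expSeries a w) = PowerSeries.C a * expSeries a w := by
  ext n
  have hn : (n : F) + 1 ≠ 0 := n.cast_add_one_ne_zero
  have hfact : (n.factorial : F) ≠ 0 := Nat.cast_ne_zero.2 n.factorial_ne_zero
  rw [PowerSeries.coeff_derivative, PowerSeries.coeff_C_mul, expSeries, PowerSeries.coeff_mk,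
    PowerSeries.coeff_mk, Nat.factorial_succ, Nat.cast_mul, Nat.cast_succ]
  field_simp
  ring

lemma iterate_derivative_taylorSeries_mul_expSeries (x a w : F) (p : F[X]) (s : ℕ) :
    (PowerSeries.derivative F)^[s] (taylorSeries x p * expSeries a w) =
      taylorSeries x ((twistedDerivative a ^ s) p) * expSeries a w := by
  induction s with
  | zero => rfl
  | succ s ih =>
    rw [Function.iterate_succ_apply', ih, Derivation.leibniz, derivative_expSeries,
      derivative_taylorSeries, twistedDerivative_pow_succ_apply, map_add, map_mul, taylorSeries_C,
      smul_eq_mul, smul_eq_mul]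
    ring

lemma X_pow_dvd_of_constantCoeff_iterate_derivative_eq_zero {k : ℕ} {G : PowerSeries F}
    (h : ∀ i < k, PowerSeries.constantCoeff ((PowerSeries.derivative F)^[i] G) = 0) :
    PowerSeries.X ^ k ∣ G := by
  rw [PowerSeries.X_pow_dvd_iff]
  intro m hm
  have hcoeff := h m hm
  rw [PowerSeries.constantCoeff_iterate_derivative] at hcoeff
  exact (mul_eq_zero.1 (by simpa using hcoeff)).resolve_left
    (Nat.cast_ne_zero.2 m.factorial_ne_zero)

-- The column of derivatives of the exponential polynomial is the Wronskian matrix applied to the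
-- column of exponentials, which are units; so Cramer's rule loses only the `t - 1` derivatives.
lemma X_sub_C_pow_dvd_expWronskian {t : ℕ} (ht : 0 < t) (α : Fin t → F) (p : Fin t → F[X])
    {S : ℕ} {x : F} {w : Fin t → F} (hw : ∀ i, w i ≠ 0)
    (h : ∀ s < S, expPolyDeriv α p w s x = 0) :
    (X - C x) ^ (S + 1 - t) ∣ expWronskian α p := by
  set G : PowerSeries F := ∑ i, taylorSeries x (p i) * expSeries (α i) (w i) with hG
  have iterate_derivative_G (s : ℕ) : (PowerSeries.derivative F)^[s] G =
      ∑ i, taylorSeries x ((twistedDerivative (α i) ^ s) (p i)) * expSeries (α i) (w i) := by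
    simp only [hG, ← Module.End.pow_apply, ← Derivation.coeFn_coe, map_sum]
    exact Finset.sum_congr rfl fun i _ => by
      rw [Module.End.pow_apply]
      exact iterate_derivative_taylorSeries_mul_expSeries x (α i) (w i) (p i) s
  have X_pow_dvd_iterate (s : ℕ) : PowerSeries.X ^ (S - s) ∣ (PowerSeries.derivative F)^[s] G := by
    refine X_pow_dvd_of_constantCoeff_iterate_derivative_eq_zero fun i hi => ?_
    rw [← Function.iterate_add_apply, iterate_derivative_G, map_sum,
      ← h (i + s) (Nat.add_lt_of_lt_sub hi)]
    refine Finset.sum_congr rfl fun j _ => ?_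
    rw [map_mul, constantCoeff_taylorSeries, constantCoeff_expSeries]
  have hdvd : PowerSeries.X ^ (S + 1 - t) ∣
      taylorSeries x (expWronskian α p) * expSeries (α ⟨0, ht⟩) (w ⟨0, ht⟩) := by
    rw [expWronskian, RingHom.map_det]
    refine dvd_det_mul_of_dvd_mulVec (v := fun i => expSeries (α i) (w i)) (fun s => ?_) ⟨0, ht⟩
    exact (pow_dvd_pow _ (by lia)).trans
      ((X_pow_dvd_iterate s).trans (iterate_derivative_G s).dvd)
  have hunit : IsUnit (expSeries (α ⟨0, ht⟩) (w ⟨0, ht⟩)) := by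
    rw [PowerSeries.isUnit_iff_constantCoeff, constantCoeff_expSeries]
    exact (hw _).isUnit
  exact X_pow_dvd_taylorSeries_iff.1 (hunit.dvd_mul_right.1 hdvd)

lemma card_mul_le_sum_natDegree_of_expPolyDeriv_eq_zero {t : ℕ} (ht : 0 < t) {α : Fin t → F}
    (hα : Function.Injective α) {p : Fin t → F[X]} (hp : ∀ i, p i ≠ 0) (s : Finset F)
    {w : F → Fin t → F} (hw : ∀ x i, w x i ≠ 0) {S : ℕ}
    (h : ∀ x ∈ s, ∀ k < S, expPolyDeriv α p (w x) k x = 0) :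
    s.card * (S + 1 - t) ≤ ∑ i, (p i).natDegree := by
  have hdvd : ∏ x ∈ s, (X - C x) ^ (S + 1 - t) ∣ expWronskian α p :=
    Finset.prod_dvd_of_coprime
      (fun a _ b _ hab =>
        (isCoprime_X_sub_C_of_isUnit_sub (sub_ne_zero.2 hab).isUnit).pow)
      fun x hx => X_sub_C_pow_dvd_expWronskian ht α p (hw x) (h x hx)
  calc s.card * (S + 1 - t) = (∏ x ∈ s, (X - C x) ^ (S + 1 - t)).natDegree := by
        rw [natDegree_prod_of_monic _ _ fun x _ => (monic_X_sub_C x).pow _]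
        simp only [natDegree_pow, natDegree_X_sub_C, mul_one, Finset.sum_const, smul_eq_mul]
    _ ≤ (expWronskian α p).natDegree := natDegree_le_of_dvd hdvd (expWronskian_ne_zero hα hp)
    _ ≤ ∑ i, (p i).natDegree := natDegree_expWronskian_le α p

lemma exists_expPolyDeriv_ne_zero {ι : Type*} [Fintype ι] {α : ι → F}
    (hα : Function.Injective α) {p : ι → F[X]} (hp : p ≠ 0) {K : ℕ}
    (hK : ∀ i, (p i).natDegree ≤ K) (s : Finset F) {w : F → ι → F} (hw : ∀ x i, w x i ≠ 0)
    {S : ℕ} (hcount : Fintype.card ι * K < s.card * (S + 1 - Fintype.card ι)) :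
    ∃ x ∈ s, ∃ k < S, expPolyDeriv α p (w x) k x ≠ 0 := by
  classical
  by_contra! hvanish
  set T : Finset ι := {i | p i ≠ 0} with hT
  have hT_pos : 0 < T.card :=
    let ⟨i, hi⟩ := Function.ne_iff.1 hp
    Finset.card_pos.2 ⟨i, Finset.mem_filter.2 ⟨Finset.mem_univ i, hi⟩⟩
  have hT_le : T.card ≤ Fintype.card ι := T.card_le_univ
  set e : Fin T.card ≃ T := T.equivFin.symm
  have sum_T (x : F) (k : ℕ) :
      expPolyDeriv (fun i => α (e i)) (fun i => p (e i)) (fun i => w x (e i)) k x =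
        expPolyDeriv α p (w x) k x := by
    set g : ι → F := fun i => ((twistedDerivative (α i) ^ k) (p i)).eval x * w x i with hg
    calc ∑ i, g (e i) = ∑ i : T, g i := e.sum_comp fun i : T => g i
      _ = ∑ i ∈ T, g i := Finset.sum_coe_sort T g
      _ = ∑ i, g i := Finset.sum_subset T.subset_univ fun i _ hi => by
          have hpi : p i = 0 := by simpa [hT] using hi
          simp only [hg, hpi, map_zero, eval_zero, zero_mul]
  have hbound : s.card * (S + 1 - T.card) ≤ Fintype.card ι * K :=
    calc s.card * (S + 1 - T.card) ≤ ∑ i, (p (e i)).natDegree :=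
          card_mul_le_sum_natDegree_of_expPolyDeriv_eq_zero hT_pos
            (hα.comp (Subtype.val_injective.comp e.injective))
            (fun i => (Finset.mem_filter.1 (e i).2).2) s (fun x i => hw x (e i))
            fun x hx k hk => (sum_T x k).trans (hvanish x hx k hk)
      _ ≤ ∑ _i : Fin T.card, K := Finset.sum_le_sum fun i _ => hK _
      _ ≤ Fintype.card ι * K := by
          rw [Finset.sum_const, Finset.card_univ, Fintype.card_fin, smul_eq_mul]
          exact Nat.mul_le_mul_right K hT_le
  have hmono : s.card * (S + 1 - Fintype.card ι) ≤ s.card * (S + 1 - T.card) :=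
    Nat.mul_le_mul_left _ (Nat.sub_le_sub_left hT_le _)
  lia

end ZeroEstimate

/-! ### Feldman's polynomials -/

section Feldman

/-- The binomial polynomial `X (X - 1) ⋯ (X - i + 1) / i!`. -/
noncomputable def binomialPoly (i : ℕ) : ℚ[X] := C ((i.factorial : ℚ)⁻¹) * descPochhammer ℚ i

/-- The subring of `ℚ[X]` of the polynomials with integer coefficients. -/
noncomputable def integerPolynomials : Subring ℚ[X] := (mapRingHom (Int.castRingHom ℚ)).range

lemma natDegree_binomialPoly (i : ℕ) : (binomialPoly i).natDegree = i := by
  rw [binomialPoly, natDegree_C_mul (by positivity), descPochhammer_natDegree]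

lemma binomialPoly_ne_zero (i : ℕ) : binomialPoly i ≠ 0 :=
  mul_ne_zero (C_ne_zero.2 (by positivity)) (monic_descPochhammer ℚ i).ne_zero

lemma binomialPoly_zero : binomialPoly 0 = 1 := by
  rw [binomialPoly, descPochhammer_zero, mul_one, Nat.factorial_zero, Nat.cast_one, inv_one, C_1]

lemma C_inv_factorial_succ (i : ℕ) :
    C (((i + 1).factorial : ℚ)⁻¹) = C ((i + 1 : ℚ)⁻¹) * C ((i.factorial : ℚ)⁻¹) := by
  rw [Nat.factorial_succ, Nat.cast_mul, mul_inv, C_mul, Nat.cast_succ]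

lemma C_inv_mul_natCast_succ (i : ℕ) : C ((i + 1 : ℚ)⁻¹) * ((i : ℚ[X]) + 1) = 1 := by
  rw [show (i : ℚ[X]) + 1 = C ((i : ℚ) + 1) by simp, ← C_mul, inv_mul_cancel₀ (by positivity),
    C_1]

lemma binomialPoly_succ (i : ℕ) :
    binomialPoly (i + 1) = C ((i + 1 : ℚ)⁻¹) * (binomialPoly i * (X - (i : ℚ[X]))) := by
  rw [binomialPoly, binomialPoly, descPochhammer_succ_right, C_inv_factorial_succ]
  ring

lemma binomialPoly_succ_eq_prod (i : ℕ) :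
    binomialPoly (i + 1) =
      C ((i + 1 : ℚ)⁻¹) * X * ∏ l ∈ Finset.range i, (C ((l + 1 : ℚ)⁻¹) * X - 1) := by
  induction i with
  | zero => simp [binomialPoly]
  | succ i ih =>
    rw [binomialPoly_succ, ih, Finset.prod_range_succ, Nat.cast_succ, Nat.cast_succ]
    linear_combination (-(C ((i + 1 + 1 : ℚ)⁻¹)) * X *
      ∏ l ∈ Finset.range i, (C ((l + 1 : ℚ)⁻¹) * X - 1)) * C_inv_mul_natCast_succ i

lemma binomialPoly_succ_eq_comp_add_comp (i : ℕ) :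
    binomialPoly (i + 1) =
      (binomialPoly (i + 1)).comp (X - 1) + (binomialPoly i).comp (X - 1) := by
  simp only [binomialPoly, mul_comp, C_comp, descPochhammer_succ_comp_X_sub_one,
    C_inv_factorial_succ, smul_eq_mul]
  linear_combination (C ((i.factorial : ℚ)⁻¹) * (descPochhammer ℚ i).comp (X - 1)) *
    C_inv_mul_natCast_succ i

lemma C_inv_mul_C_mul_X_mem_integerPolynomials {l ν : ℕ} (h : l + 1 ∣ ν) :
    C ((l + 1 : ℚ)⁻¹) * (C (ν : ℚ) * X) ∈ integerPolynomials := by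
  obtain ⟨c, rfl⟩ := h
  refine ⟨C (c : ℤ) * X, ?_⟩
  rw [← mul_assoc, ← C_mul, Nat.cast_mul, Nat.cast_succ, inv_mul_cancel_left₀ (by positivity)]
  simp

variable {b ν : ℕ}

lemma binomialPoly_comp_C_mul_X_mem_integerPolynomials (hν : ∀ l < b, l + 1 ∣ ν) {i : ℕ}
    (hi : i ≤ b) : (binomialPoly i).comp (C (ν : ℚ) * X) ∈ integerPolynomials := by
  cases i with
  | zero => rw [binomialPoly_zero, one_comp]; exact one_mem _
  | succ i =>
    rw [binomialPoly_succ_eq_prod, mul_comp, mul_comp, prod_comp, C_comp, X_comp]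
    refine mul_mem (C_inv_mul_C_mul_X_mem_integerPolynomials (hν i hi))
      (prod_mem fun l hl => ?_)
    rw [sub_comp, mul_comp, C_comp, X_comp, one_comp]
    exact sub_mem (C_inv_mul_C_mul_X_mem_integerPolynomials
      (hν l ((Finset.mem_range.1 hl).trans hi))) (one_mem _)

lemma binomialPoly_comp_mem_integerPolynomials (hν : ∀ l < b, l + 1 ∣ ν) (m : ℕ) {i : ℕ}
    (hi : i ≤ b) :
    (binomialPoly i).comp (C (ν : ℚ) * X + C (m : ℚ)) ∈ integerPolynomials := by
  induction m generalizing i with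
  | zero =>
    rw [Nat.cast_zero, C_0, add_zero]
    exact binomialPoly_comp_C_mul_X_mem_integerPolynomials hν hi
  | succ m ih =>
    cases i with
    | zero => rw [binomialPoly_zero, one_comp]; exact one_mem _
    | succ i =>
      have shift : (X - 1 : ℚ[X]).comp (C (ν : ℚ) * X + C ((m + 1 : ℕ) : ℚ)) =
          C (ν : ℚ) * X + C (m : ℚ) := by
        simp only [sub_comp, X_comp, one_comp, Nat.cast_succ, C_add, C_1]
        ring
      rw [binomialPoly_succ_eq_comp_add_comp, add_comp, comp_assoc, comp_assoc, shift]
      exact add_mem (ih hi) (ih (Nat.le_of_succ_le hi))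

lemma iterate_derivative_comp_C_mul_X_add_C {R : Type*} [CommSemiring R] (p : R[X]) (c m : R)
    (i : ℕ) :
    derivative^[i] (p.comp (C c * X + C m)) =
      C (c ^ i) * (derivative^[i] p).comp (C c * X + C m) := by
  induction i with
  | zero => rw [pow_zero, C_1, one_mul, Function.iterate_zero_apply, Function.iterate_zero_apply]
  | succ i ih =>
    rw [Function.iterate_succ_apply', ih, derivative_C_mul, derivative_comp,
      Function.iterate_succ_apply']
    simp only [derivative_add, derivative_C_mul, derivative_X, derivative_C, mul_one, add_zero,
      pow_succ, C_mul]
    ring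

lemma exists_int_eq_pow_mul_eval_iterate_derivative {p : ℚ[X]} {m : ℕ}
    (hp : p.comp (C (ν : ℚ) * X + C (m : ℚ)) ∈ integerPolynomials) (i : ℕ) :
    ∃ z : ℤ, (z : ℚ) = (ν : ℚ) ^ i * (derivative^[i] p).eval (m : ℚ) := by
  obtain ⟨u, hu⟩ := hp
  refine ⟨(derivative^[i] u).eval 0, ?_⟩
  calc (((derivative^[i] u).eval 0 : ℤ) : ℚ)
      = (derivative^[i] (mapRingHom (Int.castRingHom ℚ) u)).eval 0 := by
        rw [coe_mapRingHom, iterate_derivative_map, ← map_zero (Int.castRingHom ℚ),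
          eval_map_apply]
        rfl
    _ = (ν : ℚ) ^ i * (derivative^[i] p).eval (m : ℚ) := by
        rw [hu, iterate_derivative_comp_C_mul_X_add_C]
        simp only [eval_mul, eval_C, eval_comp, eval_add, eval_X, mul_zero, zero_add]

/-- Feldman's polynomials `binom(X, b) ^ q * binom(X, r)`, where `k = q b + r` with `r < b`. They
replace the powers `X ^ k` in the auxiliary function: their values are smaller, at the price of
denominators of their derivatives at integers that divide a power of `lcm(1, …, b)`. -/
noncomputable def feldmanPoly (b k : ℕ) : ℚ[X] := binomialPoly b ^ (k / b) * binomialPoly (k % b)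

lemma natDegree_feldmanPoly (b k : ℕ) : (feldmanPoly b k).natDegree = k := by
  rw [feldmanPoly, natDegree_mul (pow_ne_zero _ (binomialPoly_ne_zero _)) (binomialPoly_ne_zero _),
    natDegree_pow, natDegree_binomialPoly, natDegree_binomialPoly, Nat.div_add_mod']

lemma feldmanPoly_ne_zero (b k : ℕ) : feldmanPoly b k ≠ 0 :=
  mul_ne_zero (pow_ne_zero _ (binomialPoly_ne_zero _)) (binomialPoly_ne_zero _)

lemma exists_int_eq_pow_mul_eval_iterate_derivative_feldmanPoly (hb : 0 < b)
    (hν : ∀ l < b, l + 1 ∣ ν) (k m i : ℕ) :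
    ∃ z : ℤ, (z : ℚ) = (ν : ℚ) ^ i * (derivative^[i] (feldmanPoly b k)).eval (m : ℚ) := by
  apply exists_int_eq_pow_mul_eval_iterate_derivative
  rw [feldmanPoly, mul_comp, pow_comp]
  exact mul_mem (pow_mem (binomialPoly_comp_mem_integerPolynomials hν m le_rfl) _)
    (binomialPoly_comp_mem_integerPolynomials hν m (Nat.mod_lt k hb).le)

variable {ρ x : ℝ} {M : ℕ}

lemma weightedLength_taylor_descPochhammer_le (hρ : 0 ≤ ρ) (hx0 : 0 ≤ x) (hxM : x ≤ M) {i : ℕ}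
    (hi : i ≤ M) : weightedLength ρ (taylor x (descPochhammer ℝ i)) ≤ (M + ρ) ^ i := by
  induction i with
  | zero =>
    rw [descPochhammer_zero, ← C_1, taylor_C, weightedLength.C_eq, norm_one, pow_zero]
  | succ i ih =>
    have factor_eq : taylor x (X - (i : ℝ[X])) = C (x - i) + X ^ 1 := by
      rw [map_sub, taylor_X, ← C_eq_natCast, taylor_C, C_sub, pow_one]
      ring
    have factor_le : weightedLength ρ (taylor x (X - (i : ℝ[X]))) ≤ M + ρ := by
      rw [factor_eq]
      refine (weightedLength.add_le hρ _ _).trans ?_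
      rw [weightedLength.C_eq, weightedLength.X_pow_eq, pow_one]
      have hiM : (i : ℝ) ≤ M := by exact_mod_cast Nat.le_of_succ_le hi
      gcongr
      rw [Real.norm_eq_abs, abs_le]
      constructor <;> linarith [(Nat.cast_nonneg i : (0 : ℝ) ≤ i)]
    rw [descPochhammer_succ_right, taylor_mul, pow_succ]
    exact (weightedLength.mul_le hρ _ _).trans (mul_le_mul (ih (Nat.le_of_succ_le hi)) factor_le
      (weightedLength.nonneg hρ _) (by positivity))

lemma one_le_add_div (hρ : 0 ≤ ρ) (hb : 0 < b) (hbM : b ≤ M) : 1 ≤ (M + ρ) / b := by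
  rw [le_div_iff₀ (by positivity), one_mul]
  exact le_add_of_le_of_nonneg (by exact_mod_cast hbM) hρ

lemma weightedLength_taylor_binomialPoly_le (hρ : 0 ≤ ρ) (hx0 : 0 ≤ x) (hxM : x ≤ M)
    (hb : 0 < b) (hbM : b ≤ M) {i : ℕ} (hi : i ≤ b) :
    weightedLength ρ (taylor x ((binomialPoly i).map (algebraMap ℚ ℝ))) ≤
      (Real.exp 1 * ((M + ρ) / b)) ^ b := by
  have hb' : (0 : ℝ) < b := by exact_mod_cast hb
  have norm_inv_factorial : ‖algebraMap ℚ ℝ (i.factorial : ℚ)⁻¹‖ = (i.factorial : ℝ)⁻¹ := by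
    simp
  calc weightedLength ρ (taylor x ((binomialPoly i).map (algebraMap ℚ ℝ)))
      ≤ (i.factorial : ℝ)⁻¹ * (M + ρ) ^ i := by
        rw [binomialPoly, Polynomial.map_mul, descPochhammer_map, map_C, taylor_mul, taylor_C]
        refine (weightedLength.mul_le hρ _ _).trans ?_
        rw [weightedLength.C_eq, norm_inv_factorial]
        gcongr
        exact weightedLength_taylor_descPochhammer_le hρ hx0 hxM (hi.trans hbM)
    _ = (b : ℝ) ^ i / i.factorial * ((M + ρ) / b) ^ i := by
        rw [div_pow]
        field_simp
    _ ≤ Real.exp b * ((M + ρ) / b) ^ b := by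
        gcongr
        · exact Real.pow_div_factorial_le_exp _ hb'.le i
        · exact one_le_add_div hρ hb hbM
    _ = (Real.exp 1 * ((M + ρ) / b)) ^ b := by rw [mul_pow, ← Real.exp_nat_mul, mul_one]

lemma weightedLength_taylor_feldmanPoly_le (hρ : 0 ≤ ρ) (hx0 : 0 ≤ x) (hxM : x ≤ M)
    (hb : 0 < b) (hbM : b ≤ M) {Q k : ℕ} (hk : k < Q * b) :
    weightedLength ρ (taylor x ((feldmanPoly b k).map (algebraMap ℚ ℝ))) ≤
      (Real.exp 1 * ((M + ρ) / b)) ^ (Q * b) := by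
  set B : ℝ := (Real.exp 1 * ((M + ρ) / b)) ^ b with hB
  have hB1 : 1 ≤ B := one_le_pow₀ (one_le_mul_of_one_le_of_one_le
    (Real.one_le_exp zero_le_one) (one_le_add_div hρ hb hbM))
  have binomialPoly_le {i : ℕ} (hi : i ≤ b) :
      weightedLength ρ (taylor x ((binomialPoly i).map (algebraMap ℚ ℝ))) ≤ B :=
    weightedLength_taylor_binomialPoly_le hρ hx0 hxM hb hbM hi
  calc weightedLength ρ (taylor x ((feldmanPoly b k).map (algebraMap ℚ ℝ)))
      ≤ B ^ (k / b) * B := by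
        rw [feldmanPoly, Polynomial.map_mul, Polynomial.map_pow, taylor_mul, taylor_pow]
        refine (weightedLength.mul_le hρ _ _).trans ?_
        refine mul_le_mul ?_ (binomialPoly_le (Nat.mod_lt k hb).le)
          (weightedLength.nonneg hρ _) (by positivity)
        exact (weightedLength.pow_le hρ _ _).trans
          (pow_le_pow_left₀ (weightedLength.nonneg hρ _) (binomialPoly_le le_rfl) _)
    _ = B ^ (k / b + 1) := (pow_succ _ _).symm
    _ ≤ B ^ Q := pow_le_pow_right₀ hB1 (Nat.div_lt_of_lt_mul (by rwa [mul_comm] at hk))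
    _ = (Real.exp 1 * ((M + ρ) / b)) ^ (Q * b) := by rw [hB, ← pow_mul, mul_comm b Q]

lemma succ_dvd_lcmUpto {l : ℕ} (hl : l < b) : l + 1 ∣ Nat.lcmUpto b :=
  Finset.dvd_lcm (f := id) (Finset.mem_Icc.2 ⟨l.succ_pos, hl⟩)

-- `log lcm(1, …, b)` is the Chebyshev function `ψ(b)`.
lemma lcmUpto_le_exp (b : ℕ) : (Nat.lcmUpto b : ℝ) ≤ Real.exp (3 * b) := by
  rcases Nat.eq_zero_or_pos b with rfl | hb
  · simp [Nat.lcmUpto]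
  have hb1 : (1 : ℝ) ≤ b := by exact_mod_cast hb
  have hsqrt : 0 < √(b : ℝ) := Real.sqrt_pos.2 (by linarith)
  have log_sqrt_le : Real.log √(b : ℝ) ≤ √(b : ℝ) * 0.368 := by
    have hlog := Real.log_le_sub_one_of_pos (mul_pos hsqrt (Real.exp_pos (-1)))
    rw [Real.log_mul hsqrt.ne' (Real.exp_pos _).ne', Real.log_exp] at hlog
    have hexp : Real.exp (-1) ≤ 0.368 := by linarith [Real.exp_neg_one_lt_d9]
    nlinarith
  have log_four_le : Real.log 4 ≤ 1.3864 := by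
    rw [show (4 : ℝ) = 2 ^ 2 by norm_num, Real.log_pow]
    push_cast
    linarith [Real.log_two_lt_d9]
  have sqrt_mul_log_le : √(b : ℝ) * Real.log √(b : ℝ) ≤ b * 0.368 :=
    calc √(b : ℝ) * Real.log √(b : ℝ) ≤ √(b : ℝ) * (√(b : ℝ) * 0.368) := by gcongr
      _ = b * 0.368 := by rw [← mul_assoc, Real.mul_self_sqrt (by linarith)]
  rw [← Real.log_le_iff_le_exp (by exact_mod_cast Nat.lcmUpto_pos b),
    ← Chebyshev.psi_eq_log_lcmUpto]
  calc Chebyshev.psi b ≤ Real.log 4 * b + 2 * √(b : ℝ) * Real.log b := Chebyshev.psi_le hb1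
    _ = Real.log 4 * b + 4 * (√(b : ℝ) * Real.log √(b : ℝ)) := by
        rw [Real.log_sqrt (by linarith)]
        ring
    _ ≤ 3 * b := by nlinarith

end Feldman

/-! ### Analytic estimates -/

section Analytic

lemma abs_le_of_hasDerivAt_of_abs_le {f g : ℕ → ℝ → ℝ}
    (hf : ∀ l x, HasDerivAt (f l) (f (l + 1) x) x) (hg : ∀ l x, HasDerivAt (g l) (g (l + 1) x) x)
    {N : ℕ} {M : ℝ} (h0 : ∀ l < N, |f l 0| ≤ g l 0)
    (hN : ∀ x, 0 ≤ x → x ≤ M → |f N x| ≤ g N x) {s : ℕ} (hs : s ≤ N) {x : ℝ} (hx0 : 0 ≤ x)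
    (hxM : x ≤ M) : |f s x| ≤ g s x := by
  induction hs using Nat.decreasingInduction generalizing x with
  | self => exact hN x hx0 hxM
  | of_succ s hs ih =>
    exact image_norm_le_of_norm_deriv_right_le_deriv_boundary (f := f s) (f' := f (s + 1))
      (fun x _ => (hf s x).continuousAt.continuousWithinAt) (fun x _ => (hf s x).hasDerivWithinAt)
      (B := g s) (B' := g (s + 1)) (h0 s hs) (fun x => hg s x)
      (fun x hx => ih hx.1 hx.2.le) ⟨hx0, hxM⟩

/-- The polynomial `E ∑_{n ≤ N} (X / M) ^ n`, whose Taylor coefficients of order at most `N` at `0`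
are those allowed by Cauchy's inequalities for functions bounded by `E` on the disc of
radius `M`. -/
noncomputable def cauchyMajorant (E M : ℝ) (N : ℕ) : ℝ[X] :=
  ∑ n ∈ Finset.range (N + 1), C (E / M ^ n) * X ^ n

variable {E M : ℝ} {N s : ℕ} {x : ℝ}

lemma eval_iterate_derivative_cauchyMajorant (E M : ℝ) (N s : ℕ) (x : ℝ) :
    (derivative^[s] (cauchyMajorant E M N)).eval x =
      ∑ n ∈ Finset.range (N + 1), E / M ^ n * (n.descFactorial s * x ^ (n - s)) := by
  rw [cauchyMajorant, iterate_derivative_sum, eval_finsetSum]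
  refine Finset.sum_congr rfl fun n _ => ?_
  rw [iterate_derivative_C_mul, iterate_derivative_X_pow_eq_C_mul]
  simp only [eval_mul, eval_C, eval_pow, eval_X]

lemma div_pow_mul_factorial_le_eval_iterate_derivative_cauchyMajorant (hM : 0 < M) (hE : 0 ≤ E)
    (hs : s ≤ N) (hx0 : 0 ≤ x) :
    E * s.factorial / M ^ s ≤ (derivative^[s] (cauchyMajorant E M N)).eval x := by
  rw [eval_iterate_derivative_cauchyMajorant]
  calc E * s.factorial / M ^ s = E / M ^ s * (s.descFactorial s * x ^ (s - s)) := by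
        rw [Nat.descFactorial_self, Nat.sub_self, pow_zero]
        ring
    _ ≤ _ := Finset.single_le_sum
        (f := fun n => E / M ^ n * ((n.descFactorial s : ℝ) * x ^ (n - s)))
        (fun n _ => by positivity) (Finset.mem_range.2 (Nat.lt_succ_of_le hs))

lemma eval_iterate_derivative_cauchyMajorant_le (hM : 0 < M) (hE : 0 ≤ E) (hx0 : 0 ≤ x)
    (hxM : x ≤ M) :
    (derivative^[s] (cauchyMajorant E M N)).eval x ≤ E * (N + 1) * (N / M) ^ s := by
  have term_le : ∀ n ∈ Finset.range (N + 1),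
      E / M ^ n * (n.descFactorial s * x ^ (n - s)) ≤ E * (N / M) ^ s := fun n hn => by
    rcases lt_or_ge n s with hns | hns
    · rw [Nat.descFactorial_of_lt hns]
      simp only [Nat.cast_zero, zero_mul, mul_zero]
      positivity
    · have hdesc : (n.descFactorial s : ℝ) ≤ N ^ s := by
        exact_mod_cast (n.descFactorial_le_pow s).trans
          (Nat.pow_le_pow_left (Finset.mem_range_succ_iff.1 hn) s)
      calc E / M ^ n * (n.descFactorial s * x ^ (n - s))
          ≤ E / M ^ n * (N ^ s * M ^ (n - s)) := by gcongr
        _ = E * (N / M) ^ s := by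
            rw [← Nat.sub_add_cancel hns, pow_add, Nat.add_sub_cancel, div_pow]
            field_simp
  rw [eval_iterate_derivative_cauchyMajorant]
  calc _ ≤ ∑ _n ∈ Finset.range (N + 1), E * (N / M) ^ s := Finset.sum_le_sum term_le
    _ = E * (N + 1) * (N / M) ^ s := by
        rw [Finset.sum_const, Finset.card_range, nsmul_eq_mul, Nat.cast_succ]
        ring

-- A function with small Taylor coefficients at `0` up to order `N`, the last one on the whole
-- interval, has small derivatives on `[0, M]`: this replaces the maximum modulus principle.
lemma abs_le_of_small_taylor_coeff {f : ℕ → ℝ → ℝ}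
    (hf : ∀ l x, HasDerivAt (f l) (f (l + 1) x) x) (hM : 0 < M) (hE : 0 ≤ E)
    (h0 : ∀ l < N, |f l 0| * M ^ l ≤ E * l.factorial)
    (hN : ∀ x, 0 ≤ x → x ≤ M → |f N x| * M ^ N ≤ E * N.factorial)
    (hs : s ≤ N) (hx0 : 0 ≤ x) (hxM : x ≤ M) :
    |f s x| ≤ E * (N + 1) * (N / M) ^ s := by
  set g : ℕ → ℝ → ℝ := fun l x => (derivative^[l] (cauchyMajorant E M N)).eval x
  have hg (l : ℕ) (x : ℝ) : HasDerivAt (g l) (g (l + 1) x) x := by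
    simpa only [g, Function.iterate_succ_apply'] using
      (derivative^[l] (cauchyMajorant E M N)).hasDerivAt x
  refine (abs_le_of_hasDerivAt_of_abs_le hf hg (fun l hl => ?_) (fun x hx0 hxM => ?_) hs hx0
    hxM).trans (eval_iterate_derivative_cauchyMajorant_le hM hE hx0 hxM)
  · exact ((le_div_iff₀ (by positivity)).2 (h0 l hl)).trans
      (div_pow_mul_factorial_le_eval_iterate_derivative_cauchyMajorant hM hE hl.le le_rfl)
  · exact ((le_div_iff₀ (by positivity)).2 (hN x hx0 hxM)).trans
      (div_pow_mul_factorial_le_eval_iterate_derivative_cauchyMajorant hM hE le_rfl hx0)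

lemma hasDerivAt_eval_twistedDerivative_pow_mul_exp (a : ℝ) (p : ℝ[X]) (s : ℕ) (x : ℝ) :
    HasDerivAt (fun z => ((twistedDerivative a ^ s) p).eval z * Real.exp (a * z))
      (((twistedDerivative a ^ (s + 1)) p).eval x * Real.exp (a * x)) x := by
  have hexp : HasDerivAt (fun z => Real.exp (a * z)) (Real.exp (a * x) * (a * 1)) x :=
    ((hasDerivAt_id x).const_mul a).exp
  refine ((((twistedDerivative a ^ s) p).hasDerivAt x).mul hexp).congr_deriv ?_
  rw [twistedDerivative_pow_succ_apply, eval_add, eval_mul, eval_C]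
  ring

lemma eval_iterate_derivative_eq_factorial_mul_coeff_taylor {R : Type*} [CommSemiring R]
    (p : R[X]) (x : R) (i : ℕ) :
    (derivative^[i] p).eval x = i.factorial * (taylor x p).coeff i := by
  rw [taylor_coeff, ← factorial_smul_hasseDeriv, LinearMap.smul_apply, eval_smul, nsmul_eq_mul]

-- Cauchy's inequality for the `s`-th Taylor coefficient at `x` of `p(z) exp(a z)`.
lemma abs_eval_twistedDerivative_pow_mul_le {a ρ : ℝ} (ha : 0 ≤ a) (hρ : 0 ≤ ρ) (p : ℝ[X]) (x : ℝ)
    (s : ℕ) :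
    |((twistedDerivative a ^ s) p).eval x| * ρ ^ s ≤
      s.factorial * (Real.exp (a * ρ) * weightedLength ρ (taylor x p)) := by
  calc |((twistedDerivative a ^ s) p).eval x| * ρ ^ s
      ≤ (∑ i ∈ Finset.range (s + 1),
          s.factorial * (a ^ (s - i) / (s - i).factorial * ‖(taylor x p).coeff i‖)) * ρ ^ s := by
        rw [twistedDerivative_pow_apply, eval_finsetSum]
        refine mul_le_mul_of_nonneg_right ?_ (by positivity)
        refine (Finset.abs_sum_le_sum_abs _ _).trans_eq (Finset.sum_congr rfl fun i hi => ?_)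
        rw [eval_mul, eval_C, eval_iterate_derivative_eq_factorial_mul_coeff_taylor, abs_mul,
          abs_mul, abs_mul, abs_pow, abs_of_nonneg ha, Nat.abs_cast, Nat.abs_cast,
          Nat.cast_choose ℝ (Finset.mem_range_succ_iff.1 hi), Real.norm_eq_abs]
        field_simp
    _ = s.factorial * ∑ i ∈ Finset.range (s + 1),
          (a * ρ) ^ (s - i) / (s - i).factorial * (‖(taylor x p).coeff i‖ * ρ ^ i) := by
        rw [← Finset.mul_sum, mul_assoc, Finset.sum_mul]
        congr 1
        refine Finset.sum_congr rfl fun i hi => ?_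
        rw [← pow_sub_mul_pow ρ (Finset.mem_range_succ_iff.1 hi), mul_pow]
        ring
    _ ≤ s.factorial * ∑ i ∈ Finset.range (s + 1),
          Real.exp (a * ρ) * (‖(taylor x p).coeff i‖ * ρ ^ i) := by
        gcongr with i
        exact Real.pow_div_factorial_le_exp _ (by positivity) _
    _ ≤ s.factorial * (Real.exp (a * ρ) * weightedLength ρ (taylor x p)) := by
        rw [← Finset.mul_sum]
        gcongr
        exact weightedLength.sum_norm_coeff_le hρ _ _

lemma abs_eval_twistedDerivative_pow_mul_exp_mul_le {a a' ρ M x : ℝ} (ha : 0 ≤ a) (haa' : a ≤ a')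
    (hρ : 0 ≤ ρ) (hx0 : 0 ≤ x) (hxM : x ≤ M) {p : ℝ[X]} {Φ : ℝ}
    (hΦ : weightedLength ρ (taylor x p) ≤ Φ) (s : ℕ) :
    |((twistedDerivative a ^ s) p).eval x * Real.exp (a * x)| * ρ ^ s ≤
      s.factorial * (Φ * Real.exp (a' * (ρ + M))) := by
  have hΦ0 : 0 ≤ Φ := (weightedLength.nonneg hρ _).trans hΦ
  have hexp : Real.exp (a * ρ) * Real.exp (a * x) ≤ Real.exp (a' * (ρ + M)) := by
    rw [← Real.exp_add, ← mul_add]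
    gcongr
    exact ha.trans haa'
  calc _ = (|((twistedDerivative a ^ s) p).eval x| * ρ ^ s) * Real.exp (a * x) := by
        rw [abs_mul, Real.abs_exp]
        ring
    _ ≤ (s.factorial * (Real.exp (a * ρ) * weightedLength ρ (taylor x p))) *
          Real.exp (a * x) :=
        mul_le_mul_of_nonneg_right (abs_eval_twistedDerivative_pow_mul_le ha hρ p x s)
          (Real.exp_nonneg _)
    _ = s.factorial * (weightedLength ρ (taylor x p) *
          (Real.exp (a * ρ) * Real.exp (a * x))) := by ring
    _ ≤ s.factorial * (Φ * Real.exp (a' * (ρ + M))) := by gcongr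

lemma sum_choose_mul_pow_mul_abs_eval_iterate_derivative_le {ρ : ℝ} (hρ : 0 ≤ ρ) (p : ℝ[X])
    (x : ℝ) {j J s : ℕ} (hj : j ≤ J) (hs : (s : ℝ) ≤ J * ρ) :
    ∑ i ∈ Finset.range (s + 1), (s.choose i : ℝ) * j ^ (s - i) * |(derivative^[i] p).eval x| ≤
      J ^ s * weightedLength ρ (taylor x p) := by
  have choose_mul_factorial_le (i : ℕ) : (s.choose i : ℝ) * i.factorial ≤ (J * ρ) ^ i := by
    have h := Nat.descFactorial_le_pow s i
    rw [Nat.descFactorial_eq_factorial_mul_choose, mul_comm] at h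
    calc (s.choose i : ℝ) * i.factorial ≤ (s : ℝ) ^ i := by exact_mod_cast h
      _ ≤ (J * ρ) ^ i := by gcongr
  calc _ ≤ ∑ i ∈ Finset.range (s + 1), (J : ℝ) ^ s * (‖(taylor x p).coeff i‖ * ρ ^ i) := by
        refine Finset.sum_le_sum fun i hi => ?_
        rw [eval_iterate_derivative_eq_factorial_mul_coeff_taylor, abs_mul, Nat.abs_cast,
          ← Real.norm_eq_abs]
        calc _ = ((s.choose i : ℝ) * i.factorial) * j ^ (s - i) * ‖(taylor x p).coeff i‖ := by
              ring
          _ ≤ (J * ρ) ^ i * (J : ℝ) ^ (s - i) * ‖(taylor x p).coeff i‖ := by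
              gcongr
              exact choose_mul_factorial_le i
          _ = (J : ℝ) ^ s * (‖(taylor x p).coeff i‖ * ρ ^ i) := by
              rw [← pow_sub_mul_pow (J : ℝ) (Finset.mem_range_succ_iff.1 hi), mul_pow]
              ring
    _ ≤ J ^ s * weightedLength ρ (taylor x p) := by
        rw [← Finset.mul_sum]
        gcongr
        exact weightedLength.sum_norm_coeff_le hρ _ _

end Analytic

/-! ### The pigeonhole principle -/

lemma natCeil_sub_one_le {u : ℝ} (hu : 0 ≤ u) : ((⌈u⌉₊ - 1 : ℕ) : ℝ) ≤ u := by
  rcases hu.eq_or_lt with rfl | hu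
  · simp
  · exact (Nat.lt_ceil.1 (Nat.sub_lt (Nat.ceil_pos.2 hu) one_pos)).le

lemma abs_sub_le_one_of_natCeil_sub_one_eq {u v : ℝ} (hu : 0 ≤ u) (hv : 0 ≤ v)
    (h : ⌈u⌉₊ - 1 = ⌈v⌉₊ - 1) : |u - v| ≤ 1 := by
  have le_add_one (w : ℝ) : w ≤ ((⌈w⌉₊ - 1 : ℕ) : ℝ) + 1 :=
    (Nat.le_ceil w).trans (by exact_mod_cast le_tsub_add)
  have hu' := natCeil_sub_one_le hu
  have hv' := natCeil_sub_one_le hv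
  have hu1 := le_add_one u
  have hv1 := le_add_one v
  rw [h] at hu' hu1
  exact abs_le.2 ⟨by linarith, by linarith⟩

lemma abs_sum_mul_le_of_mul_sum_abs_le {ι : Type*} [Fintype ι] {A : ℕ} {c : ι → ℝ} {V : ℝ}
    (hV : A * ∑ i, |c i| ≤ V) {v : ι → ℤ} (hv : ∀ i, |v i| ≤ A) :
    |∑ i, (v i : ℝ) * c i| ≤ V := by
  refine le_trans ?_ hV
  rw [Finset.mul_sum]
  refine (Finset.abs_sum_le_sum_abs _ _).trans (Finset.sum_le_sum fun i _ => ?_)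
  rw [abs_mul]
  gcongr
  exact_mod_cast hv i

/-- **Siegel's lemma** for real linear forms, by the pigeonhole principle: the range `[-V l, V l]`
of the `l`-th form is divided into `T l` boxes. -/
lemma exists_ne_zero_abs_sum_mul_le {ι κ : Type*} [Fintype ι] [Fintype κ] {A : ℕ}
    {c : κ → ι → ℝ} {V : κ → ℝ} (hV0 : ∀ l, 0 < V l) (hV : ∀ l, A * ∑ i, |c l i| ≤ V l)
    {T : κ → ℕ} (hT : ∀ l, 0 < T l) (hcard : ∏ l, T l < (A + 1) ^ Fintype.card ι) :
    ∃ a : ι → ℤ, a ≠ 0 ∧ (∀ i, |a i| ≤ A) ∧ ∀ l, |∑ i, (a i : ℝ) * c l i| * T l ≤ 2 * V l := by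
  classical
  let form (v : ι → Fin (A + 1)) (l : κ) : ℝ := ∑ i, (((v i : ℕ) : ℤ) : ℝ) * c l i
  have abs_form_le (v l) : |form v l| ≤ V l :=
    abs_sum_mul_le_of_mul_sum_abs_le (hV l) fun i => by
      rw [Nat.abs_cast]
      exact_mod_cast Nat.lt_succ_iff.1 (v i).2
  let u (v : ι → Fin (A + 1)) (l : κ) : ℝ := (form v l + V l) / (2 * V l) * T l
  have u_nonneg (v l) : 0 ≤ u v l := by
    have := (abs_le.1 (abs_form_le v l)).1
    have := hV0 l
    exact mul_nonneg (div_nonneg (by linarith) (by linarith)) (Nat.cast_nonneg _)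
  have u_le (v l) : u v l ≤ T l := by
    have := (abs_le.1 (abs_form_le v l)).2
    have := hV0 l
    exact mul_le_of_le_one_left (Nat.cast_nonneg _) ((div_le_one (by linarith)).2 (by linarith))
  let box (v : ι → Fin (A + 1)) (l : κ) : Fin (T l) :=
    ⟨⌈u v l⌉₊ - 1, by have := Nat.ceil_le.2 (u_le v l); have := hT l; lia⟩
  obtain ⟨v, w, hvw, hbox⟩ := Fintype.exists_ne_map_eq_of_card_lt box (by
    rw [Fintype.card_pi, Fintype.card_fun, Fintype.card_fin]
    simpa only [Fintype.card_fin] using hcard)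
  refine ⟨fun i => (v i : ℤ) - (w i : ℤ), fun h0 => hvw ?_, fun i => ?_, fun l => ?_⟩
  · funext i
    have := congrFun h0 i
    simp only [Pi.zero_apply] at this
    exact Fin.ext (by lia)
  · have := (v i).2
    have := (w i).2
    rw [abs_le]
    constructor <;> lia
  · have hsub : ∑ i, (((v i : ℤ) - (w i : ℤ) : ℤ) : ℝ) * c l i = form v l - form w l := by
      simp only [form, ← Finset.sum_sub_distrib, ← sub_mul, Int.cast_sub]
    have hle := abs_sub_le_one_of_natCeil_sub_one_eq (u_nonneg v l) (u_nonneg w l)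
      (congrArg Fin.val (congrFun hbox l))
    have hu : u v l - u w l = (form v l - form w l) * T l / (2 * V l) := by ring
    rwa [hu, abs_div, abs_of_pos (mul_pos two_pos (hV0 l)),
      div_le_one (mul_pos two_pos (hV0 l)), abs_mul, Nat.abs_cast, ← hsub] at hle

lemma prod_pow_sub (R N : ℕ) : ∏ l : Fin N, R ^ (N - (l : ℕ)) = R ^ (N * (N + 1) / 2) := by
  rw [Finset.prod_pow_eq_pow_sum]
  congr 1
  calc ∑ l : Fin N, (N - (l : ℕ)) = ∑ l ∈ Finset.range N, (N - l) :=
        Fin.sum_univ_eq_sum_range (fun l => N - l) N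
    _ = ∑ l ∈ Finset.range (N + 1), (N + 1 - 1 - l) := by
        rw [Finset.sum_range_succ, Nat.add_sub_cancel, Nat.sub_self, add_zero]
    _ = N * (N + 1) / 2 := by
        rw [Finset.sum_range_reflect (fun l => l), Finset.sum_range_id, Nat.add_sub_cancel,
          mul_comm]

lemma mul_sum_abs_le_of_abs_mul_pow_le {ι : Type*} [Fintype ι] {c : ι → ℝ} {r G : ℝ} {l : ℕ}
    (hr : 0 < r) (h : ∀ i, |c i| * r ^ l ≤ l.factorial * G) (A : ℕ) :
    A * ∑ i, |c i| ≤ A * Fintype.card ι * G * (l.factorial / r ^ l) := by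
  calc A * ∑ i, |c i| ≤ A * ∑ _i : ι, l.factorial * G / r ^ l := by
        gcongr with i
        exact (le_div_iff₀ (by positivity)).2 (h i)
    _ = A * Fintype.card ι * G * (l.factorial / r ^ l) := by
        rw [Finset.sum_const, Finset.card_univ, nsmul_eq_mul]
        ring

-- Siegel's lemma makes the Taylor coefficients of order `< N` at `0` of a combination of the `h i`
-- as small as Cauchy's inequality makes the coefficient of order `N`.
lemma exists_ne_zero_abs_sum_mul_le_of_cauchy {ι : Type*} [Fintype ι] {h : ι → ℕ → ℝ → ℝ}
    (hh : ∀ i l x, HasDerivAt (h i l) (h i (l + 1) x) x) {A N R : ℕ} (hR : 0 < R) {M G : ℝ}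
    (hM : 0 < M) (hG : 0 < G)
    (hbound : ∀ i l x, 0 ≤ x → x ≤ M → |h i l x| * (R * M) ^ l ≤ l.factorial * G)
    (hcard : R ^ (N * (N + 1) / 2) < (A + 1) ^ Fintype.card ι) :
    ∃ a : ι → ℤ, a ≠ 0 ∧ (∀ i, |a i| ≤ A) ∧ ∀ s ≤ N, ∀ x, 0 ≤ x → x ≤ M →
      |∑ i, (a i : ℝ) * h i s x| ≤
        2 * (A * Fintype.card ι * G) / R ^ N * (N + 1) * (N / M) ^ s := by
  have hcard1 : 1 < (A + 1) ^ Fintype.card ι := (Nat.one_le_pow _ _ hR).trans_lt hcard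
  have hA : 0 < A := Nat.pos_of_ne_zero fun h0 => by simp [h0] at hcard1
  have hι : 0 < Fintype.card ι := Nat.pos_of_ne_zero fun h0 => by simp [h0] at hcard1
  set V : ℝ := A * Fintype.card ι * G
  have hV : 0 < V := by positivity
  have sum_abs_le (l : ℕ) {x : ℝ} (hx0 : 0 ≤ x) (hxM : x ≤ M) :
      A * ∑ i, |h i l x| ≤ V * (l.factorial / (R * M) ^ l) :=
    mul_sum_abs_le_of_abs_mul_pow_le (by positivity) (fun i => hbound i l x hx0 hxM) A
  obtain ⟨a, ha0, haA, hsmall⟩ := exists_ne_zero_abs_sum_mul_le (A := A)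
    (c := fun (l : Fin N) i => h i l 0) (V := fun l => V * ((l : ℕ).factorial / (R * M) ^ (l : ℕ)))
    (fun l => by positivity) (fun l => sum_abs_le l le_rfl hM.le)
    (T := fun l => R ^ (N - (l : ℕ))) (fun l => by positivity) (by rwa [prod_pow_sub])
  refine ⟨a, ha0, haA, fun s hs x hx0 hxM => abs_le_of_small_taylor_coeff
    (f := fun l x => ∑ i, (a i : ℝ) * h i l x)
    (fun l x => HasDerivAt.fun_sum fun i _ => (hh i l x).const_mul _) hM (by positivity)
    (fun l hl => ?_) (fun x hx0 hxM => ?_) hs hx0 hxM⟩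
  · have hform := hsmall ⟨l, hl⟩
    simp only [Nat.cast_pow] at hform
    rw [← le_div_iff₀ (by positivity)] at hform
    calc _ ≤ 2 * (V * (l.factorial / (R * M) ^ l)) / R ^ (N - l) * M ^ l := by gcongr
      _ = 2 * V / R ^ N * l.factorial := by
        rw [← pow_sub_mul_pow (R : ℝ) hl.le, mul_pow]
        field_simp
  · calc _ ≤ V * (N.factorial / (R * M) ^ N) * M ^ N := by
          gcongr
          exact abs_sum_mul_le_of_mul_sum_abs_le (sum_abs_le N hx0 hxM) haA
      _ = V / R ^ N * N.factorial := by
          rw [mul_pow]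
          field_simp
      _ ≤ 2 * V / R ^ N * N.factorial := by
          gcongr
          linarith

/-! ### The auxiliary polynomials -/

lemma linearIndependent_int_pow_of_irreducible {F : Type*} [Field F] [Algebra ℚ F] {P : ℤ[X]}
    (hP : Irreducible P) (hd : P.natDegree ≠ 0) {β : F} (hβ : aeval β P = 0) :
    LinearIndependent ℤ fun t : Fin P.natDegree => β ^ (t : ℕ) := by
  have hdeg : (minpoly ℚ β).natDegree = P.natDegree := by
    have hirr : Irreducible (P.map (algebraMap ℤ ℚ)) :=
      (IsPrimitive.Int.irreducible_iff_irreducible_map_cast (hP.isPrimitive hd)).1 hP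
    rw [← minpoly.eq_of_irreducible hirr (by rwa [aeval_map_algebraMap]),
      natDegree_mul_C (inv_ne_zero (leadingCoeff_ne_zero.2 hirr.ne_zero)),
      natDegree_map_eq_of_injective Int.cast_injective]
  rw [← hdeg]
  exact (linearIndependent_pow β).restrict_scalars' ℤ

lemma linearIndependent_map_feldmanPoly (F : Type*) [Field F] [Algebra ℚ F] (b K : ℕ) :
    LinearIndependent F fun k : Fin K => (feldmanPoly b k).map (algebraMap ℚ F) := by
  let S : Polynomial.Sequence F :=
    { elems' := fun k => (feldmanPoly b k).map (algebraMap ℚ F)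
      degree_eq' := fun k => by
        rw [degree_map, degree_eq_natDegree (feldmanPoly_ne_zero b k), natDegree_feldmanPoly] }
  exact S.linearIndependent.comp _ Fin.val_injective

lemma intCast_eq_pow_mul_eval_iterate_derivative_map {F : Type*} [Field F] [Algebra ℚ F] {z : ℤ}
    {p : ℚ[X]} {ν m i : ℕ} (hz : (z : ℚ) = (ν : ℚ) ^ i * (derivative^[i] p).eval (m : ℚ)) :
    (z : F) = (ν : F) ^ i * (derivative^[i] (p.map (algebraMap ℚ F))).eval (m : F) := by
  have hcast := congrArg (algebraMap ℚ F) hz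
  rwa [map_mul, map_pow, map_natCast, map_intCast, ← eval_map_apply, map_natCast,
    ← iterate_derivative_map] at hcast

lemma sum_norm_choose_mul_le {p : ℚ[X]} {e : ℕ → ℤ} {ν m : ℕ}
    (he : ∀ i, (e i : ℚ) = (ν : ℚ) ^ i * (derivative^[i] p).eval (m : ℚ)) {ρ : ℝ} (hρ : 0 ≤ ρ)
    {s J j : ℕ} (hs : (s : ℝ) ≤ J * ρ) (hj : j ≤ J) :
    ∑ i ∈ Finset.range (s + 1), ‖(s.choose i * (ν * j) ^ (s - i) * e i : ℤ)‖ ≤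
      ν ^ s * (J ^ s * weightedLength ρ (taylor (m : ℝ) (p.map (algebraMap ℚ ℝ)))) := by
  calc _ = ν ^ s * ∑ i ∈ Finset.range (s + 1), (s.choose i : ℝ) * j ^ (s - i) *
          |(derivative^[i] (p.map (algebraMap ℚ ℝ))).eval (m : ℝ)| := by
        rw [Finset.mul_sum]
        refine Finset.sum_congr rfl fun i hi => ?_
        rw [Int.norm_eq_abs, ← pow_sub_mul_pow (ν : ℝ) (Finset.mem_range_succ_iff.1 hi)]
        simp only [Int.cast_mul, Int.cast_pow, Int.cast_natCast, abs_mul, abs_pow, Nat.abs_cast,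
          intCast_eq_pow_mul_eval_iterate_derivative_map (he _), mul_pow]
        ring
    _ ≤ _ := by
        gcongr
        exact sum_choose_mul_pow_mul_abs_eval_iterate_derivative_le hρ _ _ hj hs

section Auxiliary

variable {κ : Type*} [Fintype κ] {d J : ℕ} (a : Fin d × κ × Fin J → ℤ)

/-- The coefficient of `exp(j θ z)` in the auxiliary function
`∑ a (t, k, j) θ ^ t φ k (z) exp(j θ z)`. -/
noncomputable def auxCoeff {F : Type*} [Field F] [Algebra ℚ F] (φ : κ → ℚ[X]) (θ : F)
    (j : Fin J) : F[X] :=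
  ∑ k, (∑ t, (a (t, k, j) : F) * θ ^ (t : ℕ)) • (φ k).map (algebraMap ℚ F)

/-- If `e k i = ν ^ i φ k ^ (i) (m)`, the integer polynomial whose value at `θ` is `ν ^ s` times the
`s`-th derivative at `m` of the auxiliary function `∑ a (t, k, j) θ ^ t φ k (z) exp(j θ z)`, with
`exp(j θ m)` replaced by `2 ^ (j m)`. -/
noncomputable def auxPoly (e : κ → ℕ → ℤ) (ν s m : ℕ) : ℤ[X] :=
  ∑ x : Fin d × κ × Fin J, ∑ i ∈ Finset.range (s + 1), monomial ((x.1 : ℕ) + (s - i))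
    (a x * (2 ^ m) ^ (x.2.2 : ℕ) * (s.choose i * (ν * (x.2.2 : ℕ)) ^ (s - i) * e x.2.1 i))

lemma natDegree_auxPoly_le (e : κ → ℕ → ℤ) (ν s m : ℕ) :
    (auxPoly a e ν s m).natDegree ≤ d + s := by
  refine natDegree_sum_le_of_forall_le _ _ fun x _ =>
    natDegree_sum_le_of_forall_le _ _ fun i _ => (natDegree_monomial_le _).trans ?_
  have := x.1.2
  lia

section Field

variable {F : Type*} [Field F] [Algebra ℚ F] (φ : κ → ℚ[X]) (θ : F)

lemma natDegree_auxCoeff_le {K : ℕ} (hφ : ∀ k, (φ k).natDegree ≤ K) (j : Fin J) :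
    (auxCoeff a φ θ j).natDegree ≤ K :=
  natDegree_sum_le_of_forall_le _ _ fun k _ => (natDegree_smul_le _ _).trans
    ((natDegree_map _).trans_le (hφ k))

variable {a φ θ} in
lemma auxCoeff_ne_zero (hφ : LinearIndependent F fun k => (φ k).map (algebraMap ℚ F))
    (hθ : LinearIndependent ℤ fun t : Fin d => θ ^ (t : ℕ)) (ha : a ≠ 0) : auxCoeff a φ θ ≠ 0 := by
  refine fun h0 => ha (funext fun ⟨t, k, j⟩ => ?_)
  have hsum : ∑ t, (a (t, k, j) : F) * θ ^ (t : ℕ) = 0 :=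
    Fintype.linearIndependent_iff.1 hφ _ (congrFun h0 j) k
  refine Fintype.linearIndependent_iff.1 hθ (fun t => a (t, k, j)) ?_ t
  simpa only [zsmul_eq_mul] using hsum

lemma expPolyDeriv_auxCoeff (w : Fin J → F) (s : ℕ) (x : F) :
    expPolyDeriv (fun j : Fin J => ((j : ℕ) : F) * θ) (auxCoeff a φ θ) w s x =
      ∑ i : Fin d × κ × Fin J, (a i : F) * (θ ^ (i.1 : ℕ) *
        (((twistedDerivative (((i.2.2 : ℕ) : F) * θ) ^ s)
          ((φ i.2.1).map (algebraMap ℚ F))).eval x * w i.2.2)) := by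
  simp only [expPolyDeriv, auxCoeff, map_sum, map_smul, eval_finsetSum, eval_smul, smul_eq_mul,
    Finset.sum_mul]
  rw [Fintype.sum_prod_type_right]
  simp only [Fintype.sum_prod_type_right]
  refine Finset.sum_congr rfl fun j _ => Finset.sum_congr rfl fun k _ =>
    Finset.sum_congr rfl fun t _ => by ring

variable {φ} in
lemma aeval_auxPoly {e : κ → ℕ → ℤ} {ν m : ℕ}
    (he : ∀ k i, (e k i : ℚ) = (ν : ℚ) ^ i * (derivative^[i] (φ k)).eval (m : ℚ)) (s : ℕ) :
    aeval θ (auxPoly a e ν s m) = (ν : F) ^ s *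
      expPolyDeriv (fun j : Fin J => ((j : ℕ) : F) * θ) (auxCoeff a φ θ)
        (fun j => (2 ^ m) ^ (j : ℕ)) s m := by
  rw [auxPoly, map_sum, expPolyDeriv_auxCoeff, Finset.mul_sum]
  refine Finset.sum_congr rfl fun x _ => ?_
  rw [map_sum, twistedDerivative_pow_apply, eval_finsetSum, Finset.sum_mul, Finset.mul_sum,
    Finset.mul_sum, Finset.mul_sum]
  refine Finset.sum_congr rfl fun i hi => ?_
  rw [aeval_monomial, eval_mul, eval_C, ← pow_sub_mul_pow (ν : F) (Finset.mem_range_succ_iff.1 hi)]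
  simp only [algebraMap_int_eq, eq_intCast, Int.cast_mul, Int.cast_pow, Int.cast_natCast,
    Int.cast_ofNat, intCast_eq_pow_mul_eval_iterate_derivative_map (he _ _), mul_pow, pow_add]
  ring

end Field

variable {a} {φ : κ → ℚ[X]} {e : κ → ℕ → ℤ} {ν s S m M A : ℕ}

lemma weightedLength_auxPoly_le
    (he : ∀ k i, (e k i : ℚ) = (ν : ℚ) ^ i * (derivative^[i] (φ k)).eval (m : ℚ))
    (ha : ∀ x, |a x| ≤ A) (hs : s ≤ S) (hm : m ≤ M) (hν : 0 < ν) (hJ : 0 < J) {ρ Φ : ℝ}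
    (hρ : 0 ≤ ρ) (hS : (S : ℝ) ≤ J * ρ)
    (hΦ : ∀ k, weightedLength ρ (taylor (m : ℝ) ((φ k).map (algebraMap ℚ ℝ))) ≤ Φ) :
    weightedLength 1 (auxPoly a e ν s m) ≤
      Fintype.card (Fin d × κ × Fin J) * (A * 2 ^ (J * M) * ν ^ S * J ^ S * Φ) := by
  have hν1 : (1 : ℝ) ≤ ν := by exact_mod_cast hν
  have hJ1 : (1 : ℝ) ≤ J := by exact_mod_cast hJ
  rw [auxPoly, ← Finset.card_univ, ← nsmul_eq_mul]
  refine (weightedLength.sum_le zero_le_one _ _).trans (Finset.sum_le_card_nsmul _ _ _ fun x _ =>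
    (weightedLength.sum_le zero_le_one _ _).trans ?_)
  have hΦ0 : 0 ≤ Φ := (weightedLength.nonneg hρ _).trans (hΦ x.2.1)
  calc _ = ‖a x * (2 ^ m) ^ (x.2.2 : ℕ)‖ * ∑ i ∈ Finset.range (s + 1),
        ‖(s.choose i * (ν * (x.2.2 : ℕ)) ^ (s - i) * e x.2.1 i : ℤ)‖ := by
        simp only [weightedLength.monomial_eq, one_pow, mul_one, norm_mul, Finset.mul_sum]
    _ ≤ A * 2 ^ (J * M) * (ν ^ s * (J ^ s * Φ)) := by
        gcongr
        · rw [Int.norm_eq_abs, Int.cast_mul, abs_mul, ← pow_mul]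
          simp only [Int.cast_pow, Int.cast_ofNat, abs_pow, Nat.abs_ofNat]
          rw [mul_comm J M]
          gcongr
          · exact_mod_cast ha x
          · exact one_le_two
          · exact x.2.2.2.le
        · exact (sum_norm_choose_mul_le (he _) hρ ((Nat.cast_le.2 hs).trans hS) x.2.2.2.le).trans
            (by gcongr; exact hΦ _)
    _ ≤ A * 2 ^ (J * M) * (ν ^ S * (J ^ S * Φ)) := by gcongr
    _ = _ := by ring

end Auxiliary

/-! ### The choice of parameters -/

/-- The free parameters of the construction: the degree `d` of `P`, the block length `b` of
Feldman's polynomials and the number `y`, of size `20 d / (1 + log d)`, of free derivatives for each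
exponential. -/
structure FeldmanParameters where
  d : ℕ
  b : ℕ
  y : ℕ
  one_le_d : 1 ≤ d
  one_le_b : 1 ≤ b
  le_y_mul : 20 * (d : ℝ) ≤ y * (1 + Real.log d)
  y_mul_le : y * (1 + Real.log d) ≤ 21 * (d : ℝ)

namespace FeldmanParameters

variable (p : FeldmanParameters)

/-- The quantity `1 + log d` by which the result improves on the trivial choice of parameters. -/
noncomputable def ℓ : ℝ := 1 + Real.log p.d

/-- The number of exponentials in the auxiliary function. -/
def J : ℕ := 40 * p.d

/-- The number of points `0, 1, …, M - 1` at which the auxiliary function is considered. -/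
def M : ℕ := 70 * p.d * p.b

/-- The ratio of the radii in Cauchy's estimates. -/
def R : ℕ := 3 * p.d

/-- The number of Feldman polynomials in the auxiliary function, a bound for their degrees. -/
def K : ℕ := p.M * p.y

/-- The order up to which derivatives of the auxiliary function are considered. -/
def S : ℕ := p.J * (p.y + 1)

/-- The number of Taylor coefficients made small by the box principle. -/
def N : ℕ := p.J * p.K

/-- The number of unknown coefficients of the auxiliary function. -/
def W : ℕ := p.d * p.N

/-- A common denominator for the derivatives of Feldman's polynomials at integers. -/
def ν : ℕ := Nat.lcmUpto p.b

/-- The size of the coefficients of the auxiliary function; the exponent makes the number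
`(A + 1) ^ W` of choices exceed the number `R ^ (N (N + 1) / 2)` of boxes. -/
noncomputable def A : ℕ := ⌊(p.R : ℝ) ^ (((p.N : ℝ) + 1) / (2 * p.d))⌋₊

/-- A bound for Feldman's polynomials on discs of radius `R M` centred in `[0, M]`. -/
noncomputable def Φ : ℝ := (Real.exp 1 * ((1 + 3 * p.d) * (70 * p.d))) ^ p.K

/-- A bound for the lengths of the auxiliary integer polynomials. -/
noncomputable def auxLength : ℝ := p.W * (p.A * 2 ^ (p.J * p.M) * p.ν ^ p.S * p.J ^ p.S * p.Φ)

/-- The factor lost when the resultant of a polynomial of degree `d` and length at most `LP` with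
an auxiliary polynomial is estimated. -/
noncomputable def resultantBound (LP : ℝ) : ℝ := (2 * LP) ^ (p.d + p.S) * (2 * p.auxLength) ^ p.d

/-! ### Size conditions -/

lemma J_pos : 0 < p.J := Nat.mul_pos (by norm_num) p.one_le_d

lemma M_pos : 0 < p.M := Nat.mul_pos (Nat.mul_pos (by norm_num) p.one_le_d) p.one_le_b

lemma R_pos : 0 < p.R := Nat.mul_pos (by norm_num) p.one_le_d

lemma ν_pos : 0 < p.ν := Nat.lcmUpto_pos p.b

lemma d_cast_pos : (0 : ℝ) < p.d := by exact_mod_cast p.one_le_d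

lemma one_le_ℓ : 1 ≤ p.ℓ := by
  rw [ℓ]
  linarith [Real.log_natCast_nonneg p.d]

lemma ℓ_le_d : p.ℓ ≤ p.d := by
  rw [ℓ]
  linarith [Real.log_le_sub_one_of_pos p.d_cast_pos]

lemma twenty_le_y : 20 ≤ p.y := by
  have hmul : 20 * (p.d : ℝ) ≤ p.y * p.d :=
    p.le_y_mul.trans (mul_le_mul_of_nonneg_left p.ℓ_le_d p.y.cast_nonneg)
  exact_mod_cast le_of_mul_le_mul_right hmul p.d_cast_pos

lemma y_le : p.y ≤ 21 * p.d := by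
  have hmul : (p.y : ℝ) ≤ 21 * p.d :=
    (le_mul_of_one_le_right p.y.cast_nonneg p.one_le_ℓ).trans p.y_mul_le
  exact_mod_cast hmul

lemma y_pos : 0 < p.y := by have := p.twenty_le_y; lia

lemma K_pos : 0 < p.K := Nat.mul_pos p.M_pos p.y_pos

lemma N_pos : 0 < p.N := Nat.mul_pos p.J_pos p.K_pos

lemma W_pos : 0 < p.W := Nat.mul_pos p.one_le_d p.N_pos

lemma b_le_M : p.b ≤ p.M := Nat.le_mul_of_pos_left _ (Nat.mul_pos (by norm_num) p.one_le_d)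

lemma d_le_M : 70 * p.d ≤ p.M := Nat.le_mul_of_pos_right _ p.one_le_b

lemma S_le_J_mul : p.S ≤ p.J * (p.R * p.M) := by
  refine Nat.mul_le_mul_left _ (le_trans ?_ (Nat.le_mul_of_pos_left p.M p.R_pos))
  linarith [p.y_le, p.d_le_M, p.one_le_d]

lemma S_le_N : p.S ≤ p.N := by
  refine Nat.mul_le_mul_left _ ?_
  calc p.y + 1 ≤ 2 * p.y := by linarith [p.y_pos]
    _ ≤ p.K := Nat.mul_le_mul_right _ (by linarith [p.d_le_M, p.one_le_d])

lemma J_mul_K_lt : p.J * p.K < p.M * (p.S + 1 - p.J) := by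
  have h : p.S + 1 - p.J = p.J * p.y + 1 := by rw [S, Nat.mul_add]; lia
  calc p.J * p.K = p.M * (p.J * p.y) := by rw [K]; ring
    _ < p.M * (p.S + 1 - p.J) := by
        rw [h]
        exact Nat.mul_lt_mul_of_pos_left (Nat.lt_succ_self _) p.M_pos

lemma one_le_A : 1 ≤ p.A :=
  Nat.floor_pos.2 (Real.one_le_rpow (by exact_mod_cast p.R_pos) (by positivity))

lemma R_pow_lt : p.R ^ (p.N * (p.N + 1) / 2) < (p.A + 1) ^ p.W := by
  have hd := p.d_cast_pos
  have hR : (0 : ℝ) ≤ p.R := p.R.cast_nonneg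
  have hpow : ((p.R : ℝ) ^ (((p.N : ℝ) + 1) / (2 * p.d))) ^ p.W =
      (p.R : ℝ) ^ (p.N * (p.N + 1) / 2) := by
    rw [← Real.rpow_natCast, ← Real.rpow_mul hR, ← Real.rpow_natCast,
      Nat.cast_div (Nat.even_mul_succ_self p.N).two_dvd (by norm_num), W]
    push_cast
    congr 1
    field_simp
  have hfloor : (p.R : ℝ) ^ (((p.N : ℝ) + 1) / (2 * p.d)) < p.A + 1 := Nat.lt_floor_add_one _
  have hlt := pow_lt_pow_left₀ hfloor (by positivity) p.W_pos.ne'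
  rw [hpow] at hlt
  exact_mod_cast hlt

lemma Φ_pos : 0 < p.Φ := by
  have hd := p.d_cast_pos
  exact pow_pos (by positivity) _

lemma auxLength_pos : 0 < p.auxLength := by
  have hW : (0 : ℝ) < p.W := by exact_mod_cast p.W_pos
  have hA : (0 : ℝ) < p.A := by exact_mod_cast p.one_le_A
  have hν : (0 : ℝ) < p.ν := by exact_mod_cast p.ν_pos
  have hJ : (0 : ℝ) < p.J := by exact_mod_cast p.J_pos
  have hΦ := p.Φ_pos
  rw [auxLength]
  positivity

lemma weightedLength_taylor_feldmanPoly_le_Φ (k : Fin p.K) {x : ℝ} (hx0 : 0 ≤ x) (hxM : x ≤ p.M) :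
    weightedLength ((p.R : ℝ) * p.M)
      (taylor x ((feldmanPoly p.b k).map (algebraMap ℚ ℝ))) ≤ p.Φ := by
  have hb : (p.b : ℝ) ≠ 0 := by exact_mod_cast (Nat.one_le_iff_ne_zero.1 p.one_le_b)
  have hK : p.K = 70 * p.d * p.y * p.b := by rw [K, M]; ring
  refine (weightedLength_taylor_feldmanPoly_le (Q := 70 * p.d * p.y) (by positivity) hx0 hxM
    p.one_le_b (by exact_mod_cast p.b_le_M) (hK ▸ k.2)).trans_eq ?_
  rw [Φ, hK, R, M]
  push_cast
  congr 2
  field_simp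

end FeldmanParameters

namespace FeldmanParameters

variable (p : FeldmanParameters)

/-! ### The auxiliary function -/

/-- The index set of the unknown coefficients of the auxiliary function. -/
abbrev Index : Type := Fin p.d × Fin p.K × Fin p.J

lemma card_index : Fintype.card p.Index = p.W := by
  simp only [Index, Fintype.card_prod, Fintype.card_fin, W, N, mul_comm p.K]

lemma exists_ne_zero_abs_expPolyDeriv_le :
    ∃ a : p.Index → ℤ, a ≠ 0 ∧ (∀ i, |a i| ≤ p.A) ∧ ∀ s ≤ p.N, ∀ m ≤ p.M,
      |expPolyDeriv (fun j : Fin p.J => ((j : ℕ) : ℝ) * Real.log 2)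
        (auxCoeff a (fun k : Fin p.K => feldmanPoly p.b k) (Real.log 2))
        (fun j => (2 ^ m) ^ (j : ℕ)) s m| ≤
      2 * (p.A * p.W * (p.Φ * 2 ^ (p.J * (p.R + 1) * p.M))) / p.R ^ p.N * (p.N + 1) *
        (p.N / p.M) ^ s := by
  set θ := Real.log 2
  have hθ0 : 0 ≤ θ := Real.log_nonneg one_le_two
  have hθ1 : θ ≤ 1 := Real.log_two_lt_d9.le.trans (by norm_num)
  have hexp : Real.exp (p.J * θ * (p.R * p.M + p.M)) = 2 ^ (p.J * (p.R + 1) * p.M) := by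
    rw [← Real.exp_log two_pos, ← Real.exp_nat_mul]
    push_cast
    congr 1
    ring
  have hΦ := p.Φ_pos
  obtain ⟨a, ha0, haA, hsmall⟩ := exists_ne_zero_abs_sum_mul_le_of_cauchy
    (h := fun (i : p.Index) l x => θ ^ (i.1 : ℕ) *
      (((twistedDerivative (((i.2.2 : ℕ) : ℝ) * θ) ^ l)
        ((feldmanPoly p.b i.2.1).map (algebraMap ℚ ℝ))).eval x *
          Real.exp (((i.2.2 : ℕ) : ℝ) * θ * x)))
    (fun i l x => (hasDerivAt_eval_twistedDerivative_pow_mul_exp _ _ l x).const_mul _)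
    p.R_pos (M := p.M) (G := p.Φ * 2 ^ (p.J * (p.R + 1) * p.M)) (by exact_mod_cast p.M_pos)
    (by positivity)
    (fun i l x hx0 hxM => by
      rw [abs_mul, mul_assoc, ← hexp]
      refine (mul_le_of_le_one_left (by positivity) ?_).trans
        (abs_eval_twistedDerivative_pow_mul_exp_mul_le (by positivity) ?_ (by positivity) hx0 hxM
          (p.weightedLength_taylor_feldmanPoly_le_Φ i.2.1 hx0 hxM) l)
      · rw [abs_of_nonneg (by positivity)]
        exact pow_le_one₀ hθ0 hθ1
      · exact mul_le_mul_of_nonneg_right (by exact_mod_cast i.2.2.2.le) hθ0)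
    (p.card_index ▸ p.R_pow_lt)
  refine ⟨a, ha0, haA, fun s hs m hm => ?_⟩
  have hsum := hsmall s hs m m.cast_nonneg (by exact_mod_cast hm)
  have hpow (j : ℕ) : Real.exp (j * θ * m) = (2 ^ m) ^ j := by
    rw [← pow_mul, mul_right_comm, ← Nat.cast_mul, Real.exp_nat_mul, Real.exp_log two_pos, mul_comm]
  simp only [hpow, p.card_index] at hsum
  rwa [expPolyDeriv_auxCoeff]

variable {p}

lemma exists_aeval_auxPoly_ne_zero {P : ℤ[X]} (hP : Irreducible P) (hd : P.natDegree = p.d)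
    (hP0 : P.coeff 0 ≠ 0) {β : ℂ} (hβ : aeval β P = 0) {a : p.Index → ℤ} (ha : a ≠ 0)
    {e : ℕ → Fin p.K → ℕ → ℤ} (he : ∀ m k i, (e m k i : ℚ) =
      (p.ν : ℚ) ^ i * (derivative^[i] (feldmanPoly p.b k)).eval (m : ℚ)) :
    ∃ m < p.M, ∃ s < p.S, aeval β (auxPoly a (e m) p.ν s m) ≠ 0 := by
  have hβ0 : β ≠ 0 := by
    rintro rfl
    exact hP0 (by simpa [aeval_def, eval₂_at_zero] using hβ)
  have hα : Function.Injective fun j : Fin p.J => ((j : ℕ) : ℂ) * β := fun i j hij =>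
    Fin.ext (Nat.cast_injective (mul_right_cancel₀ hβ0 hij))
  have hlin : LinearIndependent ℤ fun t : Fin p.d => β ^ (t : ℕ) := by
    rw [← hd]
    exact linearIndependent_int_pow_of_irreducible hP (by have := p.one_le_d; lia) hβ
  obtain ⟨x, hx, s, hs, hne⟩ := exists_expPolyDeriv_ne_zero hα
    (auxCoeff_ne_zero (linearIndependent_map_feldmanPoly ℂ p.b p.K) hlin ha)
    (natDegree_auxCoeff_le a _ β fun k => (natDegree_feldmanPoly p.b k).trans_le k.2.le)
    ((Finset.range p.M).map Nat.castEmbedding) (w := fun x j => ((2 : ℂ) ^ x) ^ (j : ℕ))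
    (fun x j => pow_ne_zero _ (by simp [Complex.cpow_eq_zero_iff])) (S := p.S)
    (by simpa only [Fintype.card_fin, Finset.card_map, Finset.card_range] using p.J_mul_K_lt)
  obtain ⟨m, hm, rfl⟩ := Finset.mem_map.1 hx
  refine ⟨m, Finset.mem_range.1 hm, s, hs, ?_⟩
  rw [aeval_auxPoly a β (he m)]
  refine mul_ne_zero (pow_ne_zero _ (Nat.cast_ne_zero.2 p.ν_pos.ne')) ?_
  simpa only [Nat.castEmbedding_apply, Complex.cpow_natCast] using hne

lemma exists_intPoly_aeval_ne_zero {P : ℤ[X]} (hP : Irreducible P) (hd : P.natDegree = p.d)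
    (hP0 : P.coeff 0 ≠ 0) {β : ℂ} (hβ : aeval β P = 0) :
    ∃ Q : ℤ[X], aeval β Q ≠ 0 ∧ Q.natDegree ≤ p.d + p.S ∧ weightedLength 1 Q ≤ p.auxLength ∧
      |aeval (Real.log 2) Q| ≤ p.auxLength *
        (2 * (p.N + 1) * p.y ^ p.S * 2 ^ (p.J * p.R * p.M)) / p.R ^ p.N := by
  obtain ⟨a, ha0, haA, hsmall⟩ := p.exists_ne_zero_abs_expPolyDeriv_le
  choose e he using fun m (k : Fin p.K) i =>
    exists_int_eq_pow_mul_eval_iterate_derivative_feldmanPoly (ν := p.ν)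
      p.one_le_b (fun _ => succ_dvd_lcmUpto) k m i
  obtain ⟨m, hm, s, hs, hne⟩ := exists_aeval_auxPoly_ne_zero hP hd hP0 hβ ha0 he
  refine ⟨_, hne, (natDegree_auxPoly_le a _ _ s m).trans (by lia), ?_, ?_⟩
  · rw [auxLength, ← p.card_index]
    exact weightedLength_auxPoly_le (he m) haA hs.le hm.le p.ν_pos p.J_pos (by positivity)
      (by exact_mod_cast p.S_le_J_mul) fun k =>
        p.weightedLength_taylor_feldmanPoly_le_Φ k m.cast_nonneg (by exact_mod_cast hm.le)
  · have hM : (p.M : ℝ) ≠ 0 := by exact_mod_cast p.M_pos.ne'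
    have hNM : (p.N : ℝ) / p.M = p.J * p.y := by
      rw [N, K]
      push_cast
      field_simp
    have h2 : (2 : ℝ) ^ (p.J * (p.R + 1) * p.M) = 2 ^ (p.J * p.R * p.M) * 2 ^ (p.J * p.M) := by
      rw [← pow_add]
      ring
    have hν : (1 : ℝ) ≤ p.ν := by exact_mod_cast p.ν_pos
    have hJy : (1 : ℝ) ≤ p.J * p.y := by exact_mod_cast Nat.mul_pos p.J_pos p.y_pos
    rw [aeval_auxPoly a _ (he m), abs_mul, abs_of_nonneg (by positivity)]
    have hΦ := p.Φ_pos
    calc _ ≤ (p.ν : ℝ) ^ p.S * (2 * (p.A * p.W * (p.Φ * 2 ^ (p.J * (p.R + 1) * p.M))) / p.R ^ p.N *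
          (p.N + 1) * (p.J * p.y) ^ p.S) := by
          gcongr
          refine (hsmall s (hs.le.trans p.S_le_N) m hm.le).trans ?_
          rw [hNM]
          gcongr
      _ = _ := by
          rw [auxLength, h2]
          ring

end FeldmanParameters

/-! ### Numerical estimates -/

lemma mul_log_le_mul_log_two {x : ℝ} {m n : ℕ} (hx : 0 < x) (h : x ^ m ≤ 2 ^ n) :
    m * Real.log x ≤ n * Real.log 2 := by
  simpa only [Real.log_pow] using Real.log_le_log (pow_pos hx m) h

lemma one_le_log_three : 1 ≤ Real.log 3 := by
  rw [Real.le_log_iff_exp_le (by norm_num)]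
  linarith [Real.exp_one_lt_d9]

namespace FeldmanParameters

variable (p : FeldmanParameters)

/-- The unit in which all contributions to the final estimate are measured. -/
noncomputable def U : ℝ := p.d ^ 2 * p.b * (p.y * p.ℓ)

lemma N_mul_ℓ : p.N * p.ℓ = 2800 * p.U := by
  simp only [N, J, K, M, U]
  push_cast
  ring

lemma one_le_d_cast : (1 : ℝ) ≤ p.d := by exact_mod_cast p.one_le_d

lemma one_le_b_cast : (1 : ℝ) ≤ p.b := by exact_mod_cast p.one_le_b

lemma twenty_le_y_cast : (20 : ℝ) ≤ p.y := by exact_mod_cast p.twenty_le_y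

lemma U_nonneg : 0 ≤ p.U := by
  have := p.one_le_ℓ
  rw [U]
  positivity

lemma mul_le_U : 20 * (p.d * (p.b * p.ℓ)) ≤ p.U := by
  have := p.one_le_ℓ
  have hd : (p.d : ℝ) ≤ p.d ^ 2 := le_self_pow₀ p.one_le_d_cast two_ne_zero
  calc 20 * (p.d * (p.b * p.ℓ)) ≤ p.y * (p.d ^ 2 * (p.b * p.ℓ)) := by
        gcongr
        exact p.twenty_le_y_cast
    _ = p.U := by rw [U]; ring

lemma b_mul_ℓ_le_U : 20 * (p.b * p.ℓ) ≤ p.U := by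
  have := p.one_le_ℓ
  have h : p.b * p.ℓ ≤ p.d * (p.b * p.ℓ) :=
    le_mul_of_one_le_left (by positivity) p.one_le_d_cast
  linarith [p.mul_le_U]

lemma log_mul_d_le {c k : ℝ} (hc : 0 < c) (hk : 1 ≤ k) (hck : Real.log c ≤ k) :
    Real.log (c * p.d) ≤ k * p.ℓ := by
  rw [Real.log_mul hc.ne' p.d_cast_pos.ne', ℓ, mul_add, mul_one]
  exact add_le_add hck (le_mul_of_one_le_left (Real.log_natCast_nonneg _) hk)

lemma ℓ_le_log_R : p.ℓ ≤ Real.log p.R := by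
  rw [R, Nat.cast_mul, Nat.cast_ofNat, Real.log_mul three_ne_zero p.d_cast_pos.ne', ℓ]
  linarith [one_le_log_three]

lemma log_R_le : Real.log p.R ≤ 1.105 * p.ℓ := by
  have h3 := mul_log_le_mul_log_two (x := 3) (m := 17) (n := 27) (by norm_num) (by norm_num)
  push_cast at h3
  rw [R, Nat.cast_mul, Nat.cast_ofNat]
  exact p.log_mul_d_le (by norm_num) (by norm_num) (by linarith [Real.log_two_lt_d9])

lemma log_J_le : Real.log p.J ≤ 3.75 * p.ℓ := by
  have h40 := mul_log_le_mul_log_two (x := 40) (m := 3) (n := 16) (by norm_num) (by norm_num)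
  push_cast at h40
  rw [J, Nat.cast_mul, Nat.cast_ofNat]
  exact p.log_mul_d_le (by norm_num) (by norm_num) (by linarith [Real.log_two_lt_d9])

lemma log_y_le : Real.log p.y ≤ 3.15 * p.ℓ := by
  have h21 := mul_log_le_mul_log_two (x := 21) (m := 2) (n := 9) (by norm_num) (by norm_num)
  push_cast at h21
  have hy : (p.y : ℝ) ≤ 21 * p.d := by exact_mod_cast p.y_le
  refine (Real.log_le_log (by exact_mod_cast p.y_pos) hy).trans ?_
  exact p.log_mul_d_le (by norm_num) (by norm_num) (by linarith [Real.log_two_lt_d9])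

lemma log_ν_le : Real.log p.ν ≤ 3 * p.b := by
  rw [Real.log_le_iff_le_exp (by exact_mod_cast p.ν_pos)]
  exact lcmUpto_le_exp p.b

lemma log_two_add_log_W_le : Real.log 2 + Real.log p.W ≤ 14 * (p.b * p.ℓ) := by
  have h5600 := mul_log_le_mul_log_two (x := 5600) (m := 1) (n := 13) (by norm_num) (by norm_num)
  push_cast at h5600
  have hb : (0 : ℝ) < p.b := by exact_mod_cast p.one_le_b
  have hy : (0 : ℝ) < p.y := by exact_mod_cast p.y_pos
  have hd := p.d_cast_pos
  have hW : (2 * p.W : ℝ) = 5600 * p.d ^ 3 * p.b * p.y := by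
    simp only [W, N, J, K, M]
    push_cast
    ring
  rw [← Real.log_mul two_ne_zero (by exact_mod_cast p.W_pos.ne'), hW,
    Real.log_mul (by positivity) hy.ne', Real.log_mul (by positivity) hb.ne',
    Real.log_mul (by norm_num) (by positivity), Real.log_pow]
  have hlogb : Real.log p.b ≤ p.b := by linarith [Real.log_le_sub_one_of_pos hb]
  have hbℓ : (p.b : ℝ) ≤ p.b * p.ℓ := le_mul_of_one_le_right hb.le p.one_le_ℓ
  have hℓb : p.ℓ ≤ p.b * p.ℓ :=
    le_mul_of_one_le_left (by linarith [p.one_le_ℓ]) p.one_le_b_cast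
  have hℓ : p.ℓ = 1 + Real.log p.d := rfl
  push_cast
  linarith [p.log_y_le, Real.log_two_lt_d9, Real.log_natCast_nonneg p.d]

lemma log_two_add_log_N_le : Real.log 2 + Real.log (p.N + 1) ≤ 15 * (p.b * p.ℓ) := by
  have hN : (p.N + 1 : ℝ) ≤ 2 * p.W := by
    have hNW : p.N ≤ p.W := Nat.le_mul_of_pos_left _ p.one_le_d
    exact_mod_cast (show p.N + 1 ≤ 2 * p.W by linarith [p.N_pos])
  have hW := p.log_two_add_log_W_le
  rw [← Real.log_mul two_ne_zero (by exact_mod_cast p.W_pos.ne')] at hW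
  have hbℓ : (1 : ℝ) ≤ p.b * p.ℓ := one_le_mul_of_one_le_of_one_le p.one_le_b_cast p.one_le_ℓ
  linarith [Real.log_le_log (by positivity) hN, Real.log_two_lt_d9]

lemma J_mul_M_mul_le : p.J * p.M * (p.R + p.d) * Real.log 2 ≤ 389 * p.U := by
  have hU : p.d ^ 2 * p.b * (20 * p.d) ≤ p.U :=
    mul_le_mul_of_nonneg_left p.le_y_mul (by positivity)
  calc p.J * p.M * (p.R + p.d) * Real.log 2
      = 560 * (p.d ^ 2 * p.b * (20 * p.d)) * Real.log 2 := by
        simp only [J, M, R]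
        push_cast
        ring
    _ ≤ 560 * p.U * 0.69315 := by
        gcongr
        · linarith [p.U_nonneg]
        · linarith [Real.log_two_lt_d9]
    _ ≤ 389 * p.U := by linarith [p.U_nonneg]

lemma log_Φ_le : p.d * Real.log p.Φ ≤ 469 * p.U := by
  have h280 := mul_log_le_mul_log_two (x := 280) (m := 5) (n := 41) (by norm_num) (by norm_num)
  push_cast at h280
  have hd := p.d_cast_pos
  have hbase : Real.log ((1 + 3 * p.d) * (70 * p.d)) ≤ Real.log (280 * p.d) + Real.log p.d := by
    rw [← Real.log_mul (by positivity) hd.ne']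
    refine Real.log_le_log (by positivity) ?_
    nlinarith [p.one_le_d_cast]
  have hlog : 1 + Real.log ((1 + 3 * p.d) * (70 * p.d)) ≤ 6.7 * p.ℓ := by
    have h := p.log_mul_d_le (c := 280) (k := 5.7) (by norm_num) (by norm_num)
      (by linarith [Real.log_two_lt_d9])
    have hℓ : p.ℓ = 1 + Real.log p.d := rfl
    linarith
  rw [Φ, Real.log_pow, Real.log_mul (Real.exp_ne_zero _) (by positivity), Real.log_exp]
  calc p.d * (p.K * (1 + Real.log ((1 + 3 * p.d) * (70 * p.d)))) ≤
        p.d * (p.K * (6.7 * p.ℓ)) := by gcongr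
    _ = 469 * p.U := by
        simp only [K, M, U]
        push_cast
        ring

lemma S_cast_le : (p.S : ℝ) ≤ 42 * (p.d * p.y) := by
  have h : (p.d : ℝ) * 20 ≤ p.d * p.y :=
    mul_le_mul_of_nonneg_left p.twenty_le_y_cast p.d.cast_nonneg
  simp only [S, J]
  push_cast
  linarith

lemma S_mul_log_ν_le : p.d * (p.S * Real.log p.ν) ≤ 126 * p.U := by
  calc p.d * (p.S * Real.log p.ν) ≤ p.d * (42 * (p.d * p.y) * (3 * p.b)) := by
        gcongr
        · exact p.S_cast_le
        · exact p.log_ν_le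
    _ = 126 * (p.d ^ 2 * p.b * (p.y * 1)) := by ring
    _ ≤ 126 * p.U := by
        rw [U]
        gcongr
        exact p.one_le_ℓ

lemma S_mul_log_J_le : p.d * (p.S * Real.log p.J) ≤ 157.5 * p.U := by
  have := p.one_le_ℓ
  calc p.d * (p.S * Real.log p.J) ≤ p.d * (42 * (p.d * p.y) * (3.75 * p.ℓ)) := by
        gcongr
        · exact p.S_cast_le
        · exact p.log_J_le
    _ = 157.5 * (p.d ^ 2 * 1 * (p.y * p.ℓ)) := by ring
    _ ≤ 157.5 * p.U := by
        rw [U]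
        gcongr
        exact p.one_le_b_cast

lemma S_mul_log_y_le : p.S * Real.log p.y ≤ 132.3 * p.U := by
  have := p.one_le_ℓ
  have hd : (p.d : ℝ) ≤ p.d ^ 2 := le_self_pow₀ p.one_le_d_cast two_ne_zero
  calc p.S * Real.log p.y ≤ 42 * (p.d * p.y) * (3.15 * p.ℓ) := by
        gcongr
        · exact p.S_cast_le
        · exact p.log_y_le
    _ = 132.3 * (p.d * 1 * (p.y * p.ℓ)) := by ring
    _ ≤ 132.3 * p.U := by
        rw [U]
        gcongr
        exact p.one_le_b_cast

lemma d_add_S_mul_le {h : ℝ} (hh : h ≤ p.b * p.d * p.ℓ) :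
    (p.d + p.S) * (Real.log 2 + h) ≤ 74 * p.U := by
  have := p.one_le_ℓ
  have hdy : (p.d : ℝ) ≤ p.d * p.y :=
    le_mul_of_one_le_right p.d.cast_nonneg (by linarith [p.twenty_le_y_cast])
  have hbd : (1 : ℝ) ≤ p.b * p.d * p.ℓ := one_le_mul_of_one_le_of_one_le
    (one_le_mul_of_one_le_of_one_le p.one_le_b_cast p.one_le_d_cast) p.one_le_ℓ
  calc (p.d + p.S) * (Real.log 2 + h) ≤ (p.d + p.S) * (1.7 * (p.b * p.d * p.ℓ)) := by
        gcongr
        linarith [Real.log_two_lt_d9]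
    _ ≤ 43 * (p.d * p.y) * (1.7 * (p.b * p.d * p.ℓ)) := by
        gcongr
        linarith [p.S_cast_le]
    _ = 73.1 * p.U := by rw [U]; ring
    _ ≤ 74 * p.U := by linarith [p.U_nonneg]

lemma d_mul_log_A_le : p.d * Real.log p.A ≤ Real.log p.R * (p.N + 1) / 2 := by
  have hR : (1 : ℝ) ≤ p.R := by exact_mod_cast p.R_pos
  have hd := p.d_cast_pos
  have hA : Real.log p.A ≤ Real.log ((p.R : ℝ) ^ (((p.N : ℝ) + 1) / (2 * p.d))) :=
    Real.log_le_log (by exact_mod_cast p.one_le_A) (Nat.floor_le (by positivity))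
  rw [Real.log_rpow (by linarith)] at hA
  calc p.d * Real.log p.A ≤ p.d * (((p.N : ℝ) + 1) / (2 * p.d) * Real.log p.R) := by gcongr
    _ = _ := by field_simp

lemma log_auxLength : Real.log p.auxLength = Real.log p.W + Real.log p.A +
    p.J * p.M * Real.log 2 + p.S * Real.log p.ν + p.S * Real.log p.J + Real.log p.Φ := by
  have hW : (0 : ℝ) < p.W := by exact_mod_cast p.W_pos
  have hA : (0 : ℝ) < p.A := by exact_mod_cast p.one_le_A
  have hν : (0 : ℝ) < p.ν := by exact_mod_cast p.ν_pos
  have hJ : (0 : ℝ) < p.J := by exact_mod_cast p.J_pos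
  have hΦ := p.Φ_pos
  rw [auxLength, Real.log_mul (by positivity) (by positivity), Real.log_mul (by positivity) hΦ.ne',
    Real.log_mul (by positivity) (by positivity), Real.log_mul (by positivity) (by positivity),
    Real.log_mul (by positivity) (by positivity), Real.log_pow, Real.log_pow, Real.log_pow]
  push_cast
  ring

lemma resultantBound_pos {LP : ℝ} (hLP : 0 < LP) : 0 < p.resultantBound LP := by
  have := p.auxLength_pos
  rw [resultantBound]
  positivity

lemma log_resultantBound {LP : ℝ} (hLP : 0 < LP) : Real.log (p.resultantBound LP) =
    (p.d + p.S) * (Real.log 2 + Real.log LP) + p.d * (Real.log 2 + Real.log p.auxLength) := by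
  have hQ := p.auxLength_pos
  rw [resultantBound, Real.log_mul (by positivity) (by positivity), Real.log_pow, Real.log_pow,
    Real.log_mul two_ne_zero hLP.ne', Real.log_mul two_ne_zero hQ.ne']
  push_cast
  rfl

lemma resultantBound_mul_lt {LP : ℝ} (hLP : 1 ≤ LP) (hlog : Real.log LP ≤ p.b * p.d * p.ℓ) :
    p.resultantBound LP * (2 * (p.N + 1) * p.y ^ p.S * 2 ^ (p.J * p.R * p.M)) < p.R ^ p.N := by
  have hLP0 : 0 < LP := by linarith
  have hR : (0 : ℝ) < p.R := by exact_mod_cast p.R_pos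
  have hy : (0 : ℝ) < p.y := by exact_mod_cast p.y_pos
  have hB := p.resultantBound_pos hLP0
  have hN : 1400 * p.U ≤ p.N * Real.log p.R / 2 := by
    have h := mul_le_mul_of_nonneg_left p.ℓ_le_log_R p.N.cast_nonneg
    rw [p.N_mul_ℓ] at h
    linarith
  have hbℓ := p.b_mul_ℓ_le_U
  have hℓb : p.ℓ ≤ p.b * p.ℓ :=
    le_mul_of_one_le_left (by linarith [p.one_le_ℓ]) p.one_le_b_cast
  have hW := mul_le_mul_of_nonneg_left p.log_two_add_log_W_le p.d.cast_nonneg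
  have hU : 0 < p.U := by linarith [p.one_le_ℓ]
  rw [← Real.log_lt_log_iff (by positivity) (by positivity),
    Real.log_mul hB.ne' (by positivity), Real.log_mul (by positivity) (by positivity),
    Real.log_mul (by positivity) (by positivity), Real.log_mul two_ne_zero (by positivity),
    Real.log_pow, Real.log_pow, Real.log_pow, p.log_resultantBound hLP0, p.log_auxLength]
  push_cast
  linarith [p.J_mul_M_mul_le, p.log_Φ_le, p.S_mul_log_ν_le, p.S_mul_log_J_le, p.S_mul_log_y_le,
    p.d_add_S_mul_le hlog, p.d_mul_log_A_le, p.log_two_add_log_N_le, p.log_R_le, p.mul_le_U]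

theorem exp_neg_le_abs_aeval_log_two {P : ℤ[X]} (hP : Irreducible P) (hd : P.natDegree = p.d)
    (hP0 : P.coeff 0 ≠ 0) {LP : ℝ} (hLP : weightedLength 1 P ≤ LP)
    (hlog : Real.log LP ≤ p.b * p.d * p.ℓ) :
    Real.exp (-(p.N * Real.log p.R)) ≤ |aeval (Real.log 2) P| := by
  have hLP1 : 1 ≤ LP := (one_le_weightedLength_one hP.ne_zero).trans hLP
  have hd0 : 0 < P.natDegree := hd ▸ p.one_le_d
  obtain ⟨β, hβ⟩ := IsAlgClosed.exists_aeval_eq_zero ℂ P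
    (natDegree_pos_iff_degree_pos.1 hd0).ne'
  obtain ⟨Q, hQβ, hQd, hQL, hQ⟩ := exists_intPoly_aeval_ne_zero hP hd hP0 hβ
  have hlt := p.resultantBound_mul_lt hLP1 hlog
  set ε : ℝ := 2 * (p.N + 1) * p.y ^ p.S * 2 ^ (p.J * p.R * p.M)
  have hR : (0 : ℝ) < p.R ^ p.N := by have := p.R_pos; positivity
  have hB := p.resultantBound_pos (zero_lt_one.trans_le hLP1)
  have hlog2 : |Real.log 2| ≤ 1 := by
    rw [abs_of_nonneg (Real.log_nonneg one_le_two)]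
    linarith [Real.log_two_lt_d9]
  rcases le_abs_aeval_or_le_abs_aeval (resultant_ne_zero_of_aeval_ne_zero hP hd0.ne' hβ hQβ)
    hd0 hlog2 hLP hQL hQd with h | h <;> rw [hd, ← resultantBound] at h
  · have hε : 1 ≤ ε := one_le_mul_of_one_le_of_one_le
      (one_le_mul_of_one_le_of_one_le (by linarith [p.N.cast_nonneg (α := ℝ)])
        (one_le_pow₀ (by linarith [p.twenty_le_y_cast]))) (one_le_pow₀ one_le_two)
    have hBR : p.resultantBound LP ≤ p.R ^ p.N := (le_mul_of_one_le_right hB.le hε).trans hlt.le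
    rw [Real.exp_neg, Real.exp_nat_mul, Real.exp_log (by exact_mod_cast p.R_pos)]
    exact (inv_le_iff_one_le_mul₀ hR).2 (hLP1.trans (h.trans (by gcongr)))
  · refine absurd h (not_le.2 ?_)
    calc |aeval (Real.log 2) Q| * p.resultantBound LP
        ≤ p.auxLength * ε / p.R ^ p.N * p.resultantBound LP := by gcongr
      _ = p.auxLength * (p.resultantBound LP * ε / p.R ^ p.N) := by ring
      _ < p.auxLength := mul_lt_of_lt_one_right p.auxLength_pos ((div_lt_one hR).2 hlt)

end FeldmanParameters

/-! ### Irreducible polynomials -/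

lemma FeldmanParameters.exists_eq_le_mul {d : ℕ} (hd : 1 ≤ d) {H : ℝ}
    (hH : d * (1 + Real.log d) ≤ H) : ∃ p : FeldmanParameters,
      p.d = d ∧ H ≤ p.b * p.d * p.ℓ ∧ (p.b : ℝ) ≤ 2 * (H / (d * (1 + Real.log d))) := by
  have hd1 : (1 : ℝ) ≤ d := by exact_mod_cast hd
  have hℓd : 1 + Real.log d ≤ d := by
    linarith [Real.log_le_sub_one_of_pos (zero_lt_one.trans_le hd1)]
  have hℓ : 0 < 1 + Real.log d := by linarith [Real.log_natCast_nonneg d]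
  have hquot : 1 ≤ H / (d * (1 + Real.log d)) := by rwa [one_le_div (by positivity)]
  have hy := Nat.ceil_lt_add_one (show 0 ≤ 20 * d / (1 + Real.log d) by positivity)
  refine ⟨⟨d, ⌈H / (d * (1 + Real.log d))⌉₊, ⌈20 * d / (1 + Real.log d)⌉₊, hd,
    Nat.one_le_ceil_iff.2 (by linarith), (div_le_iff₀ hℓ).1 (Nat.le_ceil _), ?_⟩, rfl, ?_, ?_⟩
  · calc ⌈20 * d / (1 + Real.log d)⌉₊ * (1 + Real.log d)
        ≤ (20 * d / (1 + Real.log d) + 1) * (1 + Real.log d) := by gcongr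
      _ = 20 * d + (1 + Real.log d) := by field_simp
      _ ≤ 21 * d := by linarith
  · rw [mul_assoc]
    exact (div_le_iff₀ (by positivity)).1 (Nat.le_ceil _)
  · linarith [Nat.ceil_lt_add_one (zero_le_one.trans hquot)]

lemma FeldmanParameters.N_mul_log_R_le (p : FeldmanParameters) {H : ℝ}
    (hb : p.b ≤ 2 * (H / (p.d * p.ℓ))) :
    p.N * Real.log p.R ≤ 130000 * (p.d ^ 2 / p.ℓ) * H := by
  have hd := p.d_cast_pos
  have hℓ : 0 < p.ℓ := by linarith [p.one_le_ℓ]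
  have : 0 ≤ H / (p.d * p.ℓ) := by linarith [p.one_le_b_cast]
  have hH : 0 ≤ H := by
    by_contra! hneg
    linarith [div_neg_of_neg_of_pos hneg (mul_pos hd hℓ)]
  calc p.N * Real.log p.R ≤ p.N * (1.105 * p.ℓ) :=
        mul_le_mul_of_nonneg_left p.log_R_le p.N.cast_nonneg
    _ = 1.105 * (p.N * p.ℓ) := by ring
    _ = 1.105 * 2800 * p.d ^ 2 * p.b * (p.y * p.ℓ) := by rw [p.N_mul_ℓ, U]; ring
    _ ≤ 1.105 * 2800 * p.d ^ 2 * (2 * (H / (p.d * p.ℓ))) * (21 * p.d) :=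
        mul_le_mul (mul_le_mul_of_nonneg_left hb (by positivity)) p.y_mul_le (by positivity)
          (by positivity)
    _ = 1.105 * 2800 * 42 * (p.d ^ 2 / p.ℓ * H) := by field_simp; ring
    _ ≤ 130000 * (p.d ^ 2 / p.ℓ * H) := mul_le_mul_of_nonneg_right (by norm_num) (by positivity)
    _ = 130000 * (p.d ^ 2 / p.ℓ) * H := by ring

lemma abs_aeval_eq_abs_of_irreducible_of_coeff_zero {P : ℤ[X]} (hP : Irreducible P)
    (hP0 : P.coeff 0 = 0) (x : ℝ) : |aeval x P| = |x| := by
  obtain ⟨u, rfl⟩ := prime_X.irreducible.associated_of_dvd hP (X_dvd_iff.2 hP0)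
  obtain ⟨c, hc, hcu⟩ := Polynomial.isUnit_iff.1 u.isUnit
  rw [← hcu, map_mul, aeval_X, aeval_C, abs_mul]
  rcases Int.isUnit_iff.1 hc with rfl | rfl <;> simp

lemma exp_neg_one_le_log_two : Real.exp (-1) ≤ Real.log 2 := by
  rw [Real.exp_neg]
  have h : (Real.exp 1)⁻¹ ≤ 2⁻¹ := inv_anti₀ two_pos (by linarith [Real.exp_one_gt_d9])
  linarith [Real.log_two_gt_d9]

theorem exp_neg_le_abs_aeval_log_two_of_irreducible {P : ℤ[X]} (hP : Irreducible P)
    (hd : 0 < P.natDegree) {LP H : ℝ} (hLP : weightedLength 1 P ≤ LP) (hlog : Real.log LP ≤ H)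
    (hH : P.natDegree * (1 + Real.log P.natDegree) ≤ H) :
    Real.exp (-(130000 * (P.natDegree ^ 2 / (1 + Real.log P.natDegree)) * H)) ≤
      |aeval (Real.log 2) P| := by
  obtain ⟨p, hpd, hHp, hbp⟩ := FeldmanParameters.exists_eq_le_mul hd hH
  rw [← hpd] at hH hbp ⊢
  change _ ≤ 2 * (H / (p.d * p.ℓ)) at hbp
  change p.d * p.ℓ ≤ H at hH
  change Real.exp (-(130000 * (p.d ^ 2 / p.ℓ) * H)) ≤ _
  have hd1 := p.one_le_d_cast
  have hℓ1 := p.one_le_ℓ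
  have hH1 : 1 ≤ H := (one_le_mul_of_one_le_of_one_le hd1 hℓ1).trans hH
  by_cases hP0 : P.coeff 0 = 0
  · rw [abs_aeval_eq_abs_of_irreducible_of_coeff_zero hP hP0,
      abs_of_nonneg (Real.log_nonneg one_le_two)]
    refine (Real.exp_le_exp.2 (neg_le_neg ?_)).trans exp_neg_one_le_log_two
    have hdℓ : 1 ≤ p.d ^ 2 / p.ℓ :=
      (one_le_div (by positivity)).2 (p.ℓ_le_d.trans (le_self_pow₀ hd1 two_ne_zero))
    exact one_le_mul_of_one_le_of_one_le (by linarith) hH1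
  · refine (Real.exp_le_exp.2 (neg_le_neg ?_)).trans
      (p.exp_neg_le_abs_aeval_log_two hP hpd.symm hP0 hLP (hlog.trans hHp))
    exact p.N_mul_log_R_le hbp

/-! ### Reduction to irreducible polynomials -/

lemma sq_div_one_add_log_le {x y : ℝ} (hx : 1 ≤ x) (hxy : x ≤ y) :
    x ^ 2 / (1 + Real.log x) ≤ y ^ 2 / (1 + Real.log y) := by
  have hx0 : 0 < x := by linarith
  have hy0 : 0 < y := by linarith
  have hlx : 0 ≤ Real.log x := Real.log_nonneg hx
  have hly : 0 ≤ Real.log y := Real.log_nonneg (hx.trans hxy)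
  have hlog : Real.log y - Real.log x ≤ y / x - 1 := by
    rw [← Real.log_div hy0.ne' hx0.ne']
    exact Real.log_le_sub_one_of_pos (by positivity)
  have hlinear : x * (1 + Real.log y) ≤ y * (1 + Real.log x) := by
    calc x * (1 + Real.log y) ≤ x * (y / x + Real.log x) :=
          mul_le_mul_of_nonneg_left (by linarith) hx0.le
      _ = y + x * Real.log x := by field_simp
      _ ≤ y + y * Real.log x := by gcongr
      _ = y * (1 + Real.log x) := by ring
  rw [div_le_div_iff₀ (by linarith) (by linarith), sq, sq, mul_assoc, mul_assoc]
  exact mul_le_mul hxy hlinear (by positivity) hy0.le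

lemma weightedLength_one_le_mul_mahlerMeasure (p : ℂ[X]) :
    weightedLength 1 p ≤ 2 ^ p.natDegree * p.mahlerMeasure := by
  rw [weightedLength.eq_sum_range 1 p p.natDegree.lt_succ_self]
  calc ∑ i ∈ Finset.range (p.natDegree + 1), ‖p.coeff i‖ * 1 ^ i
      ≤ ∑ i ∈ Finset.range (p.natDegree + 1), (p.natDegree.choose i : ℝ) * p.mahlerMeasure := by
        refine Finset.sum_le_sum fun i _ => ?_
        rw [one_pow, mul_one]
        exact norm_coeff_le_choose_mul_mahlerMeasure i p
    _ = 2 ^ p.natDegree * p.mahlerMeasure := by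
        rw [← Finset.sum_mul, ← Nat.cast_sum, Nat.sum_range_choose, Nat.cast_pow, Nat.cast_ofNat]

lemma weightedLength_map_intCast (P : ℤ[X]) :
    weightedLength 1 (P.map (Int.castRingHom ℂ)) = weightedLength 1 P :=
  weightedLength.map_eq _ (fun a => by simp [Int.norm_eq_abs]) P

lemma natDegree_map_intCast (P : ℤ[X]) : (P.map (Int.castRingHom ℂ)).natDegree = P.natDegree :=
  natDegree_map_eq_of_injective (RingHom.injective_int _) P

lemma weightedLength_one_eq_polyLength (P : ℤ[X]) : weightedLength 1 P = polyLength P := by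
  rw [weightedLength.eq_sum_range 1 P P.natDegree.lt_succ_self, polyLength]
  simp [Int.norm_eq_abs]

/-- The logarithmic Mahler measure of an integer polynomial. -/
noncomputable def logMahler (P : ℤ[X]) : ℝ :=
  Real.log (P.map (Int.castRingHom ℂ)).mahlerMeasure

lemma logMahler_nonneg {P : ℤ[X]} (hP : P ≠ 0) : 0 ≤ logMahler P :=
  Real.log_nonneg (one_le_mahlerMeasure_of_ne_zero hP)

lemma logMahler_mul {P Q : ℤ[X]} (hP : P ≠ 0) (hQ : Q ≠ 0) :
    logMahler (P * Q) = logMahler P + logMahler Q := by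
  have hP1 := one_le_mahlerMeasure_of_ne_zero hP
  have hQ1 := one_le_mahlerMeasure_of_ne_zero hQ
  simp only [logMahler, Polynomial.map_mul, mahlerMeasure_mul]
  exact Real.log_mul (by positivity) (by positivity)

lemma logMahler_le_log_polyLength {P : ℤ[X]} (hP : P ≠ 0) :
    logMahler P ≤ Real.log (polyLength P) := by
  have hM := one_le_mahlerMeasure_of_ne_zero hP
  refine Real.log_le_log (by positivity) ((mahlerMeasure_le_sum_norm_coeff _).trans_eq ?_)
  rw [← weightedLength_one_eq_polyLength, ← weightedLength_map_intCast, weightedLength]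
  simp only [one_pow, mul_one]

lemma one_le_abs_aeval_of_natDegree_eq_zero {P : ℤ[X]} (hP : P ≠ 0) (hd : P.natDegree = 0)
    (x : ℝ) : 1 ≤ |aeval x P| := by
  obtain ⟨z, rfl⟩ := natDegree_eq_zero.1 hd
  rw [aeval_C, algebraMap_int_eq, eq_intCast]
  exact_mod_cast Int.one_le_abs (C_ne_zero.1 hP)

lemma exp_neg_logMahler_le_of_natDegree_eq_zero {P : ℤ[X]} (hP : P ≠ 0) (hd : P.natDegree = 0)
    {c ℓ : ℝ} (hc : 0 ≤ c) (x : ℝ) :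
    Real.exp (-(c * (logMahler P + ℓ * P.natDegree))) ≤ |aeval x P| := by
  refine (Real.exp_le_one_iff.2 (neg_nonpos.2 ?_)).trans
    (one_le_abs_aeval_of_natDegree_eq_zero hP hd x)
  rw [hd, Nat.cast_zero, mul_zero, add_zero]
  exact mul_nonneg hc (logMahler_nonneg hP)

lemma exp_neg_logMahler_le_of_irreducible {P : ℤ[X]} (hP : Irreducible P) {D : ℕ}
    (hd0 : 0 < P.natDegree) (hD : P.natDegree ≤ D) :
    Real.exp (-(130000 * (D ^ 2 / (1 + Real.log D)) *
      (logMahler P + (1 + Real.log D) * P.natDegree))) ≤ |aeval (Real.log 2) P| := by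
  have hd1 : (1 : ℝ) ≤ P.natDegree := by exact_mod_cast hd0
  have hdD : (P.natDegree : ℝ) ≤ D := by exact_mod_cast hD
  have hlogd := Real.log_natCast_nonneg P.natDegree
  have := Real.log_natCast_nonneg D
  have hMahler := logMahler_nonneg hP.ne_zero
  have hM := one_le_mahlerMeasure_of_ne_zero hP.ne_zero
  have hLP : weightedLength 1 P ≤
      2 ^ P.natDegree * (P.map (Int.castRingHom ℂ)).mahlerMeasure := by
    rw [← weightedLength_map_intCast, ← natDegree_map_intCast P]
    exact weightedLength_one_le_mul_mahlerMeasure _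
  have hlogLP : Real.log (2 ^ P.natDegree * (P.map (Int.castRingHom ℂ)).mahlerMeasure) ≤
      logMahler P + P.natDegree * (1 + Real.log P.natDegree) := by
    rw [Real.log_mul (by positivity) (by positivity), Real.log_pow, add_comm, logMahler]
    gcongr
    linarith [Real.log_two_lt_d9]
  refine le_trans (Real.exp_le_exp.2 (neg_le_neg ?_))
    (exp_neg_le_abs_aeval_log_two_of_irreducible hP hd0 hLP hlogLP (by linarith))
  rw [mul_comm (1 + Real.log (D : ℝ))]
  refine mul_le_mul (mul_le_mul_of_nonneg_left (sq_div_one_add_log_le hd1 hdD) (by norm_num))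
    ?_ (by positivity) (by positivity)
  gcongr

/-- The degree bound `D` stays fixed, so that the exponent is additive over factorizations. -/
theorem exp_neg_logMahler_le {P : ℤ[X]} (hP : P ≠ 0) {D : ℕ} (hD : P.natDegree ≤ D) :
    Real.exp (-(130000 * (D ^ 2 / (1 + Real.log D)) *
      (logMahler P + (1 + Real.log D) * P.natDegree))) ≤ |aeval (Real.log 2) P| := by
  have := Real.log_natCast_nonneg D
  have hc : 0 ≤ 130000 * (D ^ 2 / (1 + Real.log D)) := by positivity
  induction P using WfDvdMonoid.induction_on_irreducible with
  | zero => exact absurd rfl hP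
  | unit u hu =>
    exact exp_neg_logMahler_le_of_natDegree_eq_zero hP (natDegree_eq_zero_of_isUnit hu) hc _
  | mul a p ha hp ih =>
    have hdeg : (p * a).natDegree = p.natDegree + a.natDegree := natDegree_mul hp.ne_zero ha
    have hfactor : Real.exp (-(130000 * (D ^ 2 / (1 + Real.log D)) *
        (logMahler p + (1 + Real.log D) * p.natDegree))) ≤ |aeval (Real.log 2) p| := by
      rcases Nat.eq_zero_or_pos p.natDegree with hp0 | hp0
      · exact exp_neg_logMahler_le_of_natDegree_eq_zero hp.ne_zero hp0 hc _
      · exact exp_neg_logMahler_le_of_irreducible hp hp0 (by lia)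
    rw [map_mul, abs_mul, logMahler_mul hp.ne_zero ha, hdeg]
    refine le_trans (le_of_eq ?_)
      (mul_le_mul hfactor (ih ha (by lia)) (Real.exp_nonneg _) (abs_nonneg _))
    rw [← Real.exp_add]
    push_cast
    ring_nf

lemma cast_le_log_add_mul_log (d : ℕ) {L : ℝ} (hL : 3 ≤ L) :
    (d : ℝ) ≤ Real.log L + d * Real.log d := by
  have hlogL : 1 ≤ Real.log L := one_le_log_three.trans (Real.log_le_log (by norm_num) hL)
  rcases Nat.lt_or_ge d 3 with hd | hd
  · interval_cases d
    · simpa using zero_le_one.trans hlogL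
    · simpa using hlogL
    · push_cast
      linarith [Real.log_two_gt_d9]
  · have hlogd : 1 ≤ Real.log d :=
      one_le_log_three.trans (Real.log_le_log (by norm_num) (by exact_mod_cast hd))
    linarith [le_mul_of_one_le_right d.cast_nonneg hlogd]

/-- **Theorem 3, part 2.** For a nonzero `P ∈ ℤ[x]` with `deg P ≤ d`, `L(P) ≤ L`, `L ≥ 3`:
`|P(log 2)| ≥ exp(−2.6·10⁵ d² (log L + d log d) (1 + log d)⁻¹)`. -/
theorem log_two_transcendence_measure (P : Polynomial ℤ) (hP : P ≠ 0)
    (d : ℕ) (hd : P.natDegree ≤ d)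
    (L : ℝ) (hL : polyLength P ≤ L) (hL3 : 3 ≤ L) :
    Real.exp (-(260000 * d ^ 2 * (Real.log L + d * Real.log d) * (1 + Real.log d)⁻¹)) ≤
      |Polynomial.aeval (Real.log 2) P| := by
  refine le_trans (Real.exp_le_exp.2 (neg_le_neg ?_)) (exp_neg_logMahler_le hP hd)
  have := Real.log_natCast_nonneg d
  have hpos : 0 < polyLength P := by
    linarith [one_le_weightedLength_one hP, weightedLength_one_eq_polyLength P]
  have hMahler : logMahler P ≤ Real.log L :=
    (logMahler_le_log_polyLength hP).trans (Real.log_le_log hpos hL)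
  have hdegree : (1 + Real.log d) * P.natDegree ≤ (1 + Real.log d) * d := by gcongr
  calc 130000 * (d ^ 2 / (1 + Real.log d)) * (logMahler P + (1 + Real.log d) * P.natDegree)
      ≤ 130000 * (d ^ 2 / (1 + Real.log d)) * (2 * (Real.log L + d * Real.log d)) := by
        gcongr
        linarith [cast_le_log_add_mul_log d hL3]
    _ = 260000 * d ^ 2 * (Real.log L + d * Real.log d) * (1 + Real.log d)⁻¹ := by ring
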